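/- arXiv:1811.12012 — 2 statements merged into one kernel-verified Lean document; each statement's English description precedes it below -/
import Mathlib

section
/- Every planar graph G contains a matching M such that the Alon–Tarsi number of G − M is at most 4; i.e., the graph polynomial of G − M has a non-vanishing monomial in which every vertex variable has exponent at most 3. -/
open MvPolynomial Finset

/- The graph polynomial `P_G = ∏_{uv ∈ E(G), u < v} (x_v - x_u)`. -/
open scoped Classical in
noncomputable def graphPoly {V : Type*} [Fintype V] [LinearOrder V]
    (G : SimpleGraph V) : MvPolynomial V ℝ :=
  ∏ p ∈ Finset.univ.filter (fun p : V × V => G.Adj p.1 p.2 ∧ p.1 < p.2),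
    (X p.2 - X p.1)

/- The signed graph polynomial `P_{G,σ} = ∏_{uv ∈ E(G), u < v} (x_v - σ(uv)·x_u)`. -/
open scoped Classical in
noncomputable def signedGraphPoly {V : Type*} [Fintype V] [LinearOrder V]
    (G : SimpleGraph V) (σ : Sym2 V → ℤ) : MvPolynomial V ℤ :=
  ∏ p ∈ Finset.univ.filter (fun p : V × V => G.Adj p.1 p.2 ∧ p.1 < p.2),
    (X p.2 - C (σ s(p.1, p.2)) * X p.1)

/- `H` is a minor of `G`: branch sets. -/
def SimpleGraph.IsMinor {W V : Type*} (H : SimpleGraph W) (G : SimpleGraph V) : Prop :=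
  ∃ f : W → Set V,
    (∀ w, (G.induce (f w)).Connected) ∧
    (∀ w₁ w₂, w₁ ≠ w₂ → Disjoint (f w₁) (f w₂)) ∧
    (∀ w₁ w₂, H.Adj w₁ w₂ → ∃ v₁ ∈ f w₁, ∃ v₂ ∈ f w₂, G.Adj v₁ v₂)

/- A graph is planar iff it has no `K₅` and no `K₃,₃` minor (Wagner's theorem). -/
def SimpleGraph.IsPlanar {V : Type*} (G : SimpleGraph V) : Prop :=
  ¬ SimpleGraph.IsMinor (completeGraph (Fin 5)) G ∧
  ¬ SimpleGraph.IsMinor (completeBipartiteGraph (Fin 3) (Fin 3)) G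



section Poly
variable {V : Type*}

lemma nv_star0 (f : MvPolynomial V ℝ) (z : V) (N : Finset V) (hz : z ∉ N) (η : V →₀ ℕ)
    (hη : η z = 0) :
    ∃ ε : ℝ, ε ≠ 0 ∧ coeff (η + ∑ u ∈ N, Finsupp.single u 1) (f * ∏ u ∈ N, (X z - X u))
      = ε * coeff η f := by
  classical
  induction N using Finset.induction_on with
  | empty => exact ⟨1, one_ne_zero, by simp⟩
  | insert u N hu ih =>
    simp only [Finset.mem_insert, not_or] at hz
    obtain ⟨ε, h0, h⟩ := ih hz.2
    refine ⟨-ε, neg_ne_zero.2 h0, ?_⟩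
    rw [Finset.prod_insert hu, Finset.sum_insert hu, mul_comm (X z - X u), ← mul_assoc, mul_sub,
      coeff_sub, add_comm (Finsupp.single u 1), ← add_assoc, coeff_mul_X, h, coeff_mul_X', if_neg]
    · ring
    · simp only [Finsupp.mem_support_iff, Finsupp.add_apply, Finsupp.finsetSum_apply, not_not, hη]
      rw [Finsupp.single_apply, if_neg (fun e => hz.1 e.symm)]
      have : ∑ x ∈ N, (Finsupp.single x 1 : V →₀ ℕ) z = 0 := by
        apply Finset.sum_eq_zero
        intro x hx
        rw [Finsupp.single_apply, if_neg]
        rintro rfl; exact hz.2 hx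
      omega

lemma nv_edge (f : MvPolynomial V ℝ) (z v : V) (hzv : z ≠ v) (η : V →₀ ℕ) (hη : η v = 0) :
    coeff (η + Finsupp.single z 1) (f * (X z - X v)) = coeff η f := by
  classical
  rw [mul_sub, coeff_sub, coeff_mul_X, coeff_mul_X', if_neg, sub_zero]
  simp [hη, Finsupp.single_apply, hzv]

lemma nv_edges (f : MvPolynomial V ℝ) (z : V) (N : Finset V) (hz : z ∉ N) (η : V →₀ ℕ)
    (hη : ∀ v ∈ N, η v = 0) :
    coeff (η + Finsupp.single z N.card) (f * ∏ u ∈ N, (X z - X u)) = coeff η f := by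
  classical
  induction N using Finset.induction_on with
  | empty => simp
  | insert u N hu ih =>
    simp only [Finset.mem_insert, not_or] at hz
    rw [Finset.prod_insert hu, mul_comm (X z - X u), ← mul_assoc, Finset.card_insert_of_notMem hu,
      Finsupp.single_add, ← add_assoc, nv_edge _ _ _ hz.1, ih hz.2]
    · exact fun v hv => hη v (Finset.mem_insert_of_mem hv)
    · simp [hη u (Finset.mem_insert_self _ _), Finsupp.single_apply, hz.1]

lemma nv_star1 (f : MvPolynomial V ℝ) (z : V) (N : Finset V) (hz : z ∉ N) (η : V →₀ ℕ)
    (hη : η z = 0) (hf : ∀ κ : V →₀ ℕ, κ z ≠ 0 → coeff κ f = 0)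
    (h : coeff (η + Finsupp.single z 1 + ∑ u ∈ N, Finsupp.single u 1)
      (f * ∏ u ∈ N, (X z - X u)) ≠ 0) :
    ∃ u ∈ N, coeff (η + Finsupp.single u 1) f ≠ 0 := by
  classical
  induction N using Finset.induction_on with
  | empty => 
    exfalso; apply h
    simp only [Finset.sum_empty, Finset.prod_empty, mul_one, add_zero]
    apply hf; simp
  | insert u N hu ih =>
    simp only [Finset.mem_insert, not_or] at hz
    have e1 : coeff (η + Finsupp.single z 1 + ∑ u ∈ insert u N, Finsupp.single u 1)
      (f * ∏ u ∈ insert u N, (X z - X u)) = 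
      coeff ((η + Finsupp.single u 1) + ∑ u ∈ N, Finsupp.single u 1) (f * ∏ u ∈ N, (X z - X u))
      - coeff (η + Finsupp.single z 1 + ∑ u ∈ N, Finsupp.single u 1)
          (f * ∏ u ∈ N, (X z - X u)) := by
      rw [Finset.prod_insert hu, mul_comm (X z - X u), ← mul_assoc, mul_sub, coeff_sub]
      congr 1
      · rw [← coeff_mul_X _ z (f * ∏ u ∈ N, (X z - X u))]; congr 1
        rw [Finset.sum_insert hu]; abel
      · rw [← coeff_mul_X _ u (f * ∏ u ∈ N, (X z - X u))]; congr 1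
        rw [Finset.sum_insert hu]; abel
    rw [e1] at h
    by_cases h2 : coeff (η + Finsupp.single z 1 + ∑ u ∈ N, Finsupp.single u 1)
          (f * ∏ u ∈ N, (X z - X u)) = 0
    · rw [h2, sub_zero] at h
      obtain ⟨ε, h0, h3⟩ := nv_star0 f z N hz.2 (η + Finsupp.single u 1)
        (by simp [hη, Finsupp.single_apply, Ne.symm hz.1])
      rw [h3] at h
      exact ⟨u, Finset.mem_insert_self _ _, right_ne_zero_of_mul h⟩
    · obtain ⟨w, hw, h3⟩ := ih hz.2 h2
      exact ⟨w, Finset.mem_insert_of_mem hw, h3⟩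

/-- If `η + 2z + N` is missing, one can shift a unit from `w` to some `u`. -/
lemma nv_trick (f : MvPolynomial V ℝ) (z w : V) (N : Finset V) (hz : z ∉ N) (hzw : z ≠ w)
    (η : V →₀ ℕ)
    (hη : η z = 0) (hf : ∀ κ : V →₀ ℕ, κ z ≠ 0 → coeff κ f = 0) (hn : coeff η f ≠ 0)
    (hwN : w ∉ N)
    (h : coeff (η + ∑ u ∈ N, Finsupp.single u 1 + Finsupp.single z 1)
      ((f * ∏ u ∈ N, (X z - X u)) * (X z - X w)) = 0) :
    ∃ κ : V →₀ ℕ, κ + Finsupp.single w 1 = η ∧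
      ∃ u ∈ N, coeff (κ + Finsupp.single u 1) f ≠ 0 := by
  classical
  by_cases hw : η w = 0
  · exfalso
    rw [nv_edge _ _ _ hzw] at h
    · obtain ⟨ε, h0, h3⟩ := nv_star0 f z N hz η hη
      rw [h3] at h
      exact mul_ne_zero h0 hn h
    · simp only [Finsupp.add_apply, Finsupp.finsetSum_apply, hw, zero_add]
      apply Finset.sum_eq_zero
      intro x hx
      rw [Finsupp.single_apply, if_neg]
      rintro rfl; exact hwN hx
  · have hle : Finsupp.single w 1 ≤ η := by
      rw [Finsupp.single_le_iff]; omega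
    refine ⟨η - Finsupp.single w 1, tsub_add_cancel_of_le hle, ?_⟩
    set κ := η - Finsupp.single w 1 with hκ
    have hκη : κ + Finsupp.single w 1 = η := tsub_add_cancel_of_le hle
    apply nv_star1 f z N hz κ _ hf
    · intro h4
      rw [mul_sub, coeff_sub, coeff_mul_X] at h
      have : η + ∑ u ∈ N, Finsupp.single u 1 + Finsupp.single z 1 =
        (κ + Finsupp.single z 1 + ∑ u ∈ N, Finsupp.single u 1) + Finsupp.single w 1 := by
        rw [← hκη]; abel
      rw [this, coeff_mul_X, h4, sub_zero] at h
      obtain ⟨ε, h0, h3⟩ := nv_star0 f z N hz η hη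
      rw [h3] at h
      exact mul_ne_zero h0 hn h
    · have := congrArg (fun t => t z) hκη
      simp at this; omega

end Poly

section GP
variable {V : Type*} [Fintype V] [LinearOrder V]

lemma gp_mul (H H1 H2 : SimpleGraph V) (h : ∀ u v, H.Adj u v ↔ H1.Adj u v ∨ H2.Adj u v)
    (hd : ∀ u v, H1.Adj u v → ¬ H2.Adj u v) :
    graphPoly H = graphPoly H1 * graphPoly H2 := by
  classical
  unfold graphPoly
  rw [← Finset.prod_union]
  · apply Finset.prod_congr _ (fun _ _ => rfl)
    ext p; simp [h]; tauto
  · rw [Finset.disjoint_left]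
    intro p; simp; intro a b c; exact absurd c (hd _ _ a)

lemma gp_star (H H1 : SimpleGraph V) (z : V) (N : Finset V) (hz : z ∉ N)
    (h : ∀ u v, H.Adj u v ↔ H1.Adj u v ∨ (u = z ∧ v ∈ N) ∨ (v = z ∧ u ∈ N))
    (hd : ∀ u, ¬ H1.Adj z u) :
    ∃ ε : ℝ, ε ≠ 0 ∧ graphPoly H = C ε * (graphPoly H1 * ∏ u ∈ N, (X z - X u)) := by
  classical
  have key : ∃ ε : ℝ, ε ≠ 0 ∧ ∏ u ∈ N, (X (max z u) - X (min z u) : MvPolynomial V ℝ)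
      = C ε * ∏ u ∈ N, (X z - X u) := by
    clear h 
    induction N using Finset.induction_on with
    | empty => exact ⟨1, one_ne_zero, by simp⟩
    | insert u N hu ih =>
      simp only [Finset.mem_insert, not_or] at hz
      obtain ⟨ε, h0, h⟩ := ih hz.2
      rw [Finset.prod_insert hu, Finset.prod_insert hu, h]
      rcases le_total z u with hzu | hzu
      · refine ⟨-ε, neg_ne_zero.2 h0, ?_⟩
        rw [max_eq_right hzu, min_eq_left hzu, map_neg]; ring
      · refine ⟨ε, h0, ?_⟩
        rw [max_eq_left hzu, min_eq_right hzu]; ring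
  obtain ⟨ε, h0, hk⟩ := key
  refine ⟨ε, h0, ?_⟩
  rw [mul_left_comm, ← hk]
  unfold graphPoly
  have : (univ.filter (fun p : V × V => H.Adj p.1 p.2 ∧ p.1 < p.2)) =
    (univ.filter (fun p : V × V => H1.Adj p.1 p.2 ∧ p.1 < p.2)) ∪
      N.image (fun u => (min z u, max z u)) := by
    ext ⟨a, b⟩
    simp only [mem_filter, mem_univ, true_and, mem_union, mem_image, Prod.mk.injEq, h]
    constructor
    · rintro ⟨h1 | ⟨rfl, h2⟩ | ⟨rfl, h2⟩, h3⟩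
      · exact Or.inl ⟨h1, h3⟩
      · exact Or.inr ⟨b, h2, min_eq_left h3.le, max_eq_right h3.le⟩
      · exact Or.inr ⟨a, h2, min_eq_right h3.le, max_eq_left h3.le⟩
    · rintro (⟨h1, h3⟩ | ⟨u, hu, rfl, rfl⟩)
      · exact ⟨Or.inl h1, h3⟩
      · have hne : z ≠ u := by rintro rfl; exact hz hu
        rcases lt_or_gt_of_ne hne with hl | hl
        · rw [max_eq_right hl.le, min_eq_left hl.le]; exact ⟨Or.inr (Or.inl ⟨rfl, hu⟩), hl⟩
        · rw [max_eq_left hl.le, min_eq_right hl.le]; exact ⟨Or.inr (Or.inr ⟨rfl, hu⟩), hl⟩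
  rw [this, Finset.prod_union, Finset.prod_image]
  · intro a _ b _ hab
    simp only [Prod.mk.injEq] at hab
    rcases le_total z a with h1 | h1 <;> rcases le_total z b with h2 | h2 <;>
      simp only [h1, h2, max_eq_left, max_eq_right, min_eq_left, min_eq_right] at hab
    · exact hab.2
    · rw [hab.2, ← hab.1]
    · rw [hab.1, hab.2]
    · exact hab.1
  · rw [Finset.disjoint_left]
    rintro ⟨a, b⟩
    simp only [mem_filter, mem_univ, true_and, mem_image, Prod.mk.injEq, not_exists, not_and]
    rintro ⟨h1, -⟩ u hu rfl rfl
    rcases le_total z u with hzu | hzu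
    · rw [max_eq_right hzu, min_eq_left hzu] at h1; exact hd _ h1
    · rw [max_eq_left hzu, min_eq_right hzu] at h1; exact hd _ h1.symm

/-- variables not touched by the graph do not occur -/
lemma gp_vars (H : SimpleGraph V) (z : V) (hd : ∀ u, ¬ H.Adj z u) (κ : V →₀ ℕ) (hκ : κ z ≠ 0) :
    coeff κ (graphPoly H) = 0 := by
  classical
  by_contra hc
  have h1 : z ∈ (graphPoly H).vars := by
    rw [mem_vars_iff_mem_support]; exact ⟨κ, by simpa [mem_support_iff] using hc, by simpa using hκ⟩
  unfold graphPoly at h1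
  have h2 := vars_prod _ h1
  simp only [mem_biUnion, mem_filter, mem_univ, true_and] at h2
  obtain ⟨p, ⟨hp, -⟩, h3⟩ := h2
  have h4 := vars_sub_subset _ h3
  simp only [mem_union, vars_X, mem_singleton] at h4
  rcases h4 with rfl | rfl
  · exact hd _ hp.symm
  · exact hd _ hp

lemma gp_hom (H : SimpleGraph V) : ∃ n, (graphPoly H).IsHomogeneous n := by
  classical
  unfold graphPoly
  refine ⟨_, IsHomogeneous.prod _ _ (fun _ => 1) ?_⟩
  intro p _
  exact (isHomogeneous_X _ _).sub (isHomogeneous_X _ _)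

lemma gp_sep (H1 H2 : SimpleGraph V) (S1 S2 R : Finset V) (hS : ∀ v, v ∈ S1 → v ∈ S2 → v ∈ R)
    (h1 : ∀ u v, H1.Adj u v → u ∈ S1) (h2 : ∀ u v, H2.Adj u v → u ∈ S2)
    (η1 η2 : V →₀ ℕ) (e1 : ∀ v, v ∉ S1 → η1 v = 0) 
    (e2 : ∀ v ∈ R, η2 v = 0) (c1 : coeff η1 (graphPoly H1) ≠ 0)
    (c2 : coeff η2 (graphPoly H2) ≠ 0) :
    coeff (η1 + η2) (graphPoly H1 * graphPoly H2) ≠ 0 := by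
  classical
  obtain ⟨n, hn⟩ := gp_hom H2
  rw [coeff_mul, Finset.sum_eq_single (η1, η2)]
  · exact mul_ne_zero c1 c2
  · rintro ⟨α, β⟩ hab hne
    rw [Finset.HasAntidiagonal.mem_antidiagonal] at hab
    by_contra hc
    have ca := left_ne_zero_of_mul hc
    have cb := right_ne_zero_of_mul hc
    simp only at ca cb hab
    have dβ := hn cb
    have d2 := hn c2
    have hle : ∀ v, η2 v ≤ β v := by
      intro v
      have hv := DFunLike.congr_fun hab v
      simp only [Finsupp.add_apply] at hv
      by_cases hR : v ∈ R
      · rw [e2 v hR]; exact Nat.zero_le _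
      by_cases hv1 : v ∈ S1
      · have hv2 : v ∉ S2 := fun h => hR (hS v hv1 h)
        have : η2 v = 0 := by
          by_contra h0
          exact c2 (gp_vars H2 v (fun u hu => hv2 (h2 _ _ hu)) η2 h0)
        omega
      · have : α v = 0 := by
          by_contra h0
          exact ca (gp_vars H1 v (fun u hu => hv1 (h1 _ _ hu)) α h0)
        have := e1 v hv1
        omega
    have hb : β = η2 := by
      by_contra hbn
      obtain ⟨γ, rfl⟩ := exists_add_of_le (show η2 ≤ β from hle)
      rw [map_add, d2] at dβ
      have h0 : Finsupp.weight (1 : V → ℕ) γ = 0 := by omega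
      have h0' : Finsupp.degree γ = 0 := by
        rw [Finsupp.degree_eq_weight_one]; exact h0
      have := (Finsupp.degree_eq_zero_iff γ).1 h0'
      exact hbn (by simp [this])
    subst hb
    exact hne (by rw [add_right_cancel hab])
  · intro h; exact (h (by rw [Finset.HasAntidiagonal.mem_antidiagonal])).elim

end GP

section Minor
variable {V : Type*}

/-- cut-based connectivity of a vertex set (the empty set is allowed) -/
def CutConn (G : SimpleGraph V) (W : Set V) : Prop :=
  ∀ D : Set V, D ⊆ W → D.Nonempty → (W \ D).Nonempty → ∃ a ∈ D, ∃ b ∈ W \ D, G.Adj a b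

lemma CutConn.connected {G : SimpleGraph V} {W : Set V} (h : CutConn G W) (hn : W.Nonempty) :
    (G.induce W).Connected := by
  obtain ⟨x, hx⟩ := hn
  rw [SimpleGraph.connected_iff_exists_forall_reachable]
  refine ⟨⟨x, hx⟩, ?_⟩
  by_contra hc
  push Not at hc
  obtain ⟨w, hw⟩ := hc
  obtain ⟨a, ⟨ha, har⟩, b, ⟨hb, hbr⟩, hab⟩ :=
    h {v | ∃ hv : v ∈ W, (G.induce W).Reachable ⟨x, hx⟩ ⟨v, hv⟩} (fun v hv => hv.1)
      ⟨x, hx, SimpleGraph.Reachable.refl _⟩ ⟨w, w.2, fun ⟨_, hv⟩ => hw hv⟩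
  apply hbr
  refine ⟨hb, har.trans ?_⟩
  apply SimpleGraph.Adj.reachable
  simpa using hab

lemma CutConn.single (G : SimpleGraph V) (x : V) : CutConn G {x} := by
  rintro D hD ⟨a, ha⟩ ⟨b, hb, hb'⟩
  have h1 := hD ha
  rw [Set.mem_singleton_iff] at h1 hb
  subst h1; subst hb; exact absurd ha hb'

lemma CutConn.union {G : SimpleGraph V} {W W' : Set V} (h : CutConn G W) (h' : CutConn G W')
    (hl : (W ∩ W').Nonempty ∨ ∃ a ∈ W, ∃ b ∈ W', G.Adj a b) : CutConn G (W ∪ W') := by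
  rintro D hD ⟨d, hd⟩ ⟨e, he, he'⟩
  by_contra hc
  push Not at hc
  have key : ∀ U : Set V, CutConn G U → U ⊆ W ∪ W' → U ⊆ D ∨ Disjoint U D := by
    intro U hU hUs
    by_contra hcc
    rw [not_or] at hcc
    rw [Set.not_subset, Set.not_disjoint_iff] at hcc
    obtain ⟨⟨p, hp, hp'⟩, q, hq, hq'⟩ := hcc
    obtain ⟨a, ha, b, hb, hab⟩ := hU (U ∩ D) Set.inter_subset_left ⟨q, hq, hq'⟩
      ⟨p, hp, fun h => hp' h.2⟩
    exact hc a ha.2 b ⟨hUs hb.1, fun h => hb.2 ⟨hb.1, h⟩⟩ hab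
  rcases key W h Set.subset_union_left with k1 | k1 <;>
    rcases key W' h' Set.subset_union_right with k2 | k2
  · exact he' (he.elim (fun t => k1 t) (fun t => k2 t))
  · rcases hl with ⟨x, hx, hx'⟩ | ⟨a, ha, b, hb, hab⟩
    · exact Set.disjoint_left.1 k2 hx' (k1 hx)
    · exact hc a (k1 ha) b ⟨Or.inr hb, Set.disjoint_left.1 k2 hb⟩ hab
  · rcases hl with ⟨x, hx, hx'⟩ | ⟨a, ha, b, hb, hab⟩
    · exact Set.disjoint_left.1 k1 hx (k2 hx')
    · exact hc b (k2 hb) a ⟨Or.inl ha, Set.disjoint_left.1 k1 ha⟩ hab.symm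
  · rcases hD hd with t | t
    · exact Set.disjoint_left.1 k1 t hd
    · exact Set.disjoint_left.1 k2 t hd

/-- `W` links `x` and `y` -/
def Links (G : SimpleGraph V) (W : Set V) (x y : V) : Prop :=
  (W = ∅ ∧ G.Adj x y) ∨ (W.Nonempty ∧ (∃ a ∈ W, G.Adj x a) ∧ ∃ b ∈ W, G.Adj y b)

lemma exists_link {G : SimpleGraph V} {T0 T : Set V} {x y : V} (hxy : x ≠ y)
    (hx : x ∈ T) (hy : y ∈ T) (hT : ∀ v ∈ T, v ≠ x → v ≠ y → v ∈ T0) (hT0 : T0 ⊆ T)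
    (hyT : y ∉ T0)
    (hc : CutConn G T) : ∃ W ⊆ T0, CutConn G W ∧ Links G W x y := by
  by_contra hno
  push Not at hno
  obtain ⟨a, ha, b, ⟨hb, hb'⟩, hab⟩ := hc
    ({x} ∪ {v | ∃ W ⊆ T0, CutConn G W ∧ (∃ a ∈ W, G.Adj x a) ∧ v ∈ W})
    (by
      rintro v (rfl | ⟨W, hW, -, -, hv⟩)
      · exact hx
      · exact hT0 (hW hv)) ⟨x, Or.inl rfl⟩
    ⟨y, hy, by
      rintro (h | ⟨W, hW, -, -, hv⟩)
      · exact hxy h.symm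
      · exact hyT (hW hv)⟩
  by_cases hby : b = y
  · subst hby
    rcases ha with rfl | ⟨W, hW, hWc, h1, hv⟩
    · exact hno ∅ (Set.empty_subset _) (fun D hD hn => absurd (hn.mono hD) Set.not_nonempty_empty)
        (Or.inl ⟨rfl, hab⟩)
    · exact hno W hW hWc (Or.inr ⟨⟨a, hv⟩, h1, a, hv, hab.symm⟩)
  · have hbx : b ≠ x := fun h => hb' (Or.inl h)
    have hbT := hT b hb hbx hby
    apply hb'
    right
    rcases ha with rfl | ⟨W, hW, hWc, ⟨c, hc, hxc⟩, hv⟩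
    · exact ⟨{b}, by simpa using hbT, CutConn.single _ _, ⟨b, rfl, hab⟩, rfl⟩
    · exact ⟨W ∪ {b}, Set.union_subset hW (by simpa using hbT),
        hWc.union (CutConn.single _ _) (Or.inr ⟨a, hv, b, rfl, hab⟩), ⟨c, Or.inl hc, hxc⟩, Or.inr rfl⟩

def Touch (G : SimpleGraph V) (X Y : Set V) : Prop := ∃ a ∈ X, ∃ b ∈ Y, G.Adj a b

lemma Touch.symm {G : SimpleGraph V} {X Y : Set V} (h : Touch G X Y) : Touch G Y X := by
  obtain ⟨a, ha, b, hb, hab⟩ := h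
  exact ⟨b, hb, a, ha, hab.symm⟩

lemma minor_K5 {G : SimpleGraph V} {A B C D E : Set V}
    (hA : (G.induce A).Connected) (hB : (G.induce B).Connected) (hC : (G.induce C).Connected)
    (hD : (G.induce D).Connected) (hE : (G.induce E).Connected)
    (dAB : Disjoint A B) (dAC : Disjoint A C) (dAD : Disjoint A D) (dAE : Disjoint A E)
    (dBC : Disjoint B C) (dBD : Disjoint B D) (dBE : Disjoint B E)
    (dCD : Disjoint C D) (dCE : Disjoint C E) (dDE : Disjoint D E)
    (tAB : Touch G A B) (tAC : Touch G A C) (tAD : Touch G A D) (tAE : Touch G A E)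
    (tBC : Touch G B C) (tBD : Touch G B D) (tBE : Touch G B E)
    (tCD : Touch G C D) (tCE : Touch G C E) (tDE : Touch G D E) :
    SimpleGraph.IsMinor (SimpleGraph.completeGraph (Fin 5)) G := by
  refine ⟨![A, B, C, D, E], ?_, ?_, ?_⟩
  · intro w
    fin_cases w <;> assumption
  · intro i j hij
    fin_cases i <;> fin_cases j <;> first
      | exact absurd rfl hij
      | assumption
      | (apply Disjoint.symm; assumption)
  · intro i j hij
    change Touch G _ _
    fin_cases i <;> fin_cases j <;> first
      | exact absurd hij (SimpleGraph.irrefl _)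
      | assumption
      | (apply Touch.symm; assumption)

lemma minor_K33 {G : SimpleGraph V} {A B C D E F : Set V}
    (hA : (G.induce A).Connected) (hB : (G.induce B).Connected) (hC : (G.induce C).Connected)
    (hD : (G.induce D).Connected) (hE : (G.induce E).Connected) (hF : (G.induce F).Connected)
    (dAB : Disjoint A B) (dAC : Disjoint A C) (dAD : Disjoint A D) (dAE : Disjoint A E)
    (dAF : Disjoint A F)
    (dBC : Disjoint B C) (dBD : Disjoint B D) (dBE : Disjoint B E) (dBF : Disjoint B F)
    (dCD : Disjoint C D) (dCE : Disjoint C E) (dCF : Disjoint C F)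
    (dDE : Disjoint D E) (dDF : Disjoint D F) (dEF : Disjoint E F)
    (tAD : Touch G A D) (tAE : Touch G A E) (tAF : Touch G A F)
    (tBD : Touch G B D) (tBE : Touch G B E) (tBF : Touch G B F)
    (tCD : Touch G C D) (tCE : Touch G C E) (tCF : Touch G C F) :
    SimpleGraph.IsMinor (completeBipartiteGraph (Fin 3) (Fin 3)) G := by
  refine ⟨Sum.elim ![A, B, C] ![D, E, F], ?_, ?_, ?_⟩
  · rintro (w | w) <;> fin_cases w <;> assumption
  · rintro (i | i) (j | j) hij <;> fin_cases i <;> fin_cases j <;> first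
      | exact absurd rfl hij
      | assumption
      | (apply Disjoint.symm; assumption)
  · rintro (i | i) (j | j) hij
    · simp at hij
    · change Touch G _ _
      fin_cases i <;> fin_cases j <;> assumption
    · change Touch G _ _
      apply Touch.symm
      fin_cases i <;> fin_cases j <;> assumption
    · simp at hij

lemma planar_key {G : SimpleGraph V} (hG : G.IsPlanar) {A T : Set V} {z : V} {y : Fin 3 → V}
    (hA : CutConn G A) (hAT : Disjoint A T) (hzA : z ∉ A) (hzT : z ∉ T)
    (hy : ∀ i, y i ∈ T) (hinj : Function.Injective y)
    (hAz : ∃ a ∈ A, G.Adj a z) (hAy : ∀ i, ∃ a ∈ A, G.Adj a (y i)) (hzy : ∀ i, G.Adj z (y i))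
    (hc : ∀ i, CutConn G (T \ {y i})) : False := by
  set T0 : Set V := T \ Set.range y with hT0
  have hT0T : T0 ⊆ T := Set.sdiff_subset
  have hyT0 : ∀ i, y i ∉ T0 := fun i h => h.2 ⟨i, rfl⟩
  have link : ∀ i j k : Fin 3, i ≠ j → i ≠ k → j ≠ k → 
      ∃ W ⊆ T0, CutConn G W ∧ Links G W (y i) (y j) := by
    intro i j k hij hik hjk
    apply exists_link (T := T \ {y k}) (fun h => hij (hinj h)) ⟨hy i, fun h => hik (hinj h)⟩
      ⟨hy j, fun h => hjk (hinj h)⟩ _ _ (hyT0 j) (hc k)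
    · rintro v ⟨hv, hvk⟩ hvi hvj
      refine ⟨hv, ?_⟩
      rintro ⟨l, rfl⟩
      have : l = i ∨ l = j ∨ l = k := by omega
      rcases this with rfl | rfl | rfl
      · exact hvi rfl
      · exact hvj rfl
      · exact hvk rfl
    · rintro v hv
      exact ⟨hT0T hv, fun h => hyT0 k (by rw [← Set.mem_singleton_iff.1 h]; exact hv)⟩
  have cA : (G.induce A).Connected := hA.connected (by obtain ⟨a, ha, -⟩ := hAz; exact ⟨a, ha⟩)
  have cs : ∀ x, (G.induce ({x} : Set V)).Connected := fun x =>
    (CutConn.single G x).connected ⟨x, rfl⟩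
  have tripod : ∀ W ⊆ T0, CutConn G W → (∀ i, ∃ a ∈ W, G.Adj (y i) a) → False := by
    intro W hW hWc hWy
    apply hG.2
    have dW : ∀ i, Disjoint W {y i} := fun i => by
      rw [Set.disjoint_singleton_right]; exact fun h => hyT0 i (hW h)
    have dAi : ∀ i, Disjoint A {y i} := fun i => by
      rw [Set.disjoint_singleton_right]; exact fun h => Set.disjoint_left.1 hAT h (hy i)
    have dzi : ∀ i, Disjoint ({z} : Set V) {y i} := fun i => by
      rw [Set.disjoint_singleton]; rintro rfl; exact hzT (hy i)
    have dij : ∀ i j, i ≠ j → Disjoint ({y i} : Set V) {y j} := fun i j h => by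
      rw [Set.disjoint_singleton]; exact fun h' => h (hinj h')
    have tA : ∀ i, Touch G A {y i} := fun i => by
      obtain ⟨a, ha, h⟩ := hAy i; exact ⟨a, ha, _, rfl, h⟩
    have tW : ∀ i, Touch G W {y i} := fun i => by
      obtain ⟨a, ha, h⟩ := hWy i; exact ⟨a, ha, _, rfl, h.symm⟩
    have tz : ∀ i, Touch G {z} {y i} := fun i => ⟨z, rfl, _, rfl, hzy i⟩
    have cW : (G.induce W).Connected := hWc.connected (by
      obtain ⟨a, ha, -⟩ := hWy 0; exact ⟨a, ha⟩)
    exact minor_K33 cA (cs z) cW (cs (y 0)) (cs (y 1)) (cs (y 2))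
      (by rw [Set.disjoint_singleton_right]; exact hzA)
      (hAT.mono_right (hW.trans hT0T)) (dAi _) (dAi _) (dAi _)
      (by rw [Set.disjoint_singleton_left]; exact fun h => hzT (hT0T (hW h)))
      (dzi _) (dzi _) (dzi _) (dW _) (dW _) (dW _) (dij _ _ (by decide)) (dij _ _ (by decide))
      (dij _ _ (by decide)) (tA _) (tA _) (tA _) (tz _) (tz _) (tz _) (tW _) (tW _) (tW _)
  obtain ⟨W01, s01, c01, l01⟩ := link 0 1 2 (by decide) (by decide) (by decide)
  obtain ⟨W12, s12, c12, l12⟩ := link 1 2 0 (by decide) (by decide) (by decide)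
  obtain ⟨W20, s20, c20, l20⟩ := link 2 0 1 (by decide) (by decide) (by decide)
  have disj : ∀ (i j k : Fin 3) (W W' : Set V), (∀ l, l = i ∨ l = j ∨ l = k) → W ⊆ T0 → W' ⊆ T0 →
      CutConn G W → CutConn G W' → Links G W (y i) (y j) → Links G W' (y j) (y k) →
      Disjoint W W' := by
    intro i j k W W' hl hW hW' cW cW' l1 l2
    by_contra hd
    rw [Set.not_disjoint_iff] at hd
    obtain ⟨x, hx, hx'⟩ := hd
    rcases l1 with ⟨rfl, -⟩ | ⟨-, ⟨a, ha, ha'⟩, b, hb, hb'⟩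
    · exact hx
    rcases l2 with ⟨rfl, -⟩ | ⟨-, -, c, hcc, hc'⟩
    · exact hx'
    apply tripod (W ∪ W') (Set.union_subset hW hW') (cW.union cW' (Or.inl ⟨x, hx, hx'⟩))
    intro l
    rcases hl l with rfl | rfl | rfl
    · exact ⟨a, Or.inl ha, ha'⟩
    · exact ⟨b, Or.inl hb, hb'⟩
    · exact ⟨c, Or.inr hcc, hc'⟩
  have d1 := disj 0 1 2 W01 W12 (by decide) s01 s12 c01 c12 l01 l12
  have d2 := disj 1 2 0 W12 W20 (by decide) s12 s20 c12 c20 l12 l20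
  have d3 := disj 2 0 1 W20 W01 (by decide) s20 s01 c20 c01 l20 l01
  have cc : ∀ (i j : Fin 3) (W : Set V), CutConn G W → Links G W (y i) (y j) →
      (G.induce ({y i} ∪ W)).Connected := by
    intro i j W cW l
    apply CutConn.connected _ ⟨y i, Or.inl rfl⟩
    rcases l with ⟨rfl, -⟩ | ⟨-, ⟨a, ha, ha'⟩, -⟩
    · rw [Set.union_empty]; exact CutConn.single _ _
    · exact (CutConn.single _ _).union cW (Or.inr ⟨_, rfl, a, ha, ha'⟩)
  have tt : ∀ (i j : Fin 3) (W W' : Set V), Links G W (y i) (y j) → 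
      Touch G ({y i} ∪ W) ({y j} ∪ W') := by
    intro i j W W' l
    rcases l with ⟨rfl, h⟩ | ⟨-, -, b, hb, hb'⟩
    · exact ⟨_, Or.inl rfl, _, Or.inl rfl, h⟩
    · exact ⟨b, Or.inr hb, _, Or.inl rfl, hb'.symm⟩
  have dd : ∀ (i j : Fin 3) (W W' : Set V), i ≠ j → W ⊆ T0 → W' ⊆ T0 → Disjoint W W' →
      Disjoint ({y i} ∪ W) ({y j} ∪ W') := by
    intro i j W W' hij hW hW' hd
    rw [Set.disjoint_union_left, Set.disjoint_union_right, Set.disjoint_union_right,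
      Set.disjoint_singleton, Set.disjoint_singleton_left, Set.disjoint_singleton_right]
    exact ⟨⟨fun h => hij (hinj h), fun h => hyT0 _ (hW' h)⟩, fun h => hyT0 _ (hW h), hd⟩
  have sT : ∀ (i : Fin 3) (W : Set V), W ⊆ T0 → ({y i} ∪ W) ⊆ T := fun i W hW =>
    Set.union_subset (by simpa using hy i) (hW.trans hT0T)
  have dz : ∀ (X : Set V), X ⊆ T → Disjoint ({z} : Set V) X := fun X hX => by
    rw [Set.disjoint_singleton_left]; exact fun h => hzT (hX h)
  have tA : ∀ (i : Fin 3) (W : Set V), Touch G A ({y i} ∪ W) := fun i W => by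
    obtain ⟨a, ha, h⟩ := hAy i; exact ⟨a, ha, _, Or.inl rfl, h⟩
  have tz : ∀ (i : Fin 3) (W : Set V), Touch G {z} ({y i} ∪ W) := fun i W =>
    ⟨z, rfl, _, Or.inl rfl, hzy i⟩
  apply hG.1
  exact minor_K5 (A := A) (B := {z}) (C := {y 0} ∪ W01) (D := {y 1} ∪ W12) (E := {y 2} ∪ W20)
    cA (cs z) (cc _ _ _ c01 l01) (cc _ _ _ c12 l12) (cc _ _ _ c20 l20)
    (by rw [Set.disjoint_singleton_right]; exact hzA)
    (hAT.mono_right (sT _ _ s01)) (hAT.mono_right (sT _ _ s12)) (hAT.mono_right (sT _ _ s20))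
    (dz _ (sT _ _ s01)) (dz _ (sT _ _ s12)) (dz _ (sT _ _ s20))
    (dd _ _ _ _ (by decide) s01 s12 d1) (dd _ _ _ _ (by decide) s01 s20 d3.symm)
    (dd _ _ _ _ (by decide) s12 s20 d2)
    (by obtain ⟨a, ha, h⟩ := hAz; exact ⟨a, ha, z, rfl, h⟩)
    (tA _ _) (tA _ _) (tA _ _) (tz _ _) (tz _ _) (tz _ _)
    (tt _ _ _ _ l01) (tt _ _ _ _ l20).symm (tt _ _ _ _ l12)

end Minor

section Nice
variable {V : Type*} [Fintype V] [LinearOrder V]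

lemma sum_single_apply' (N : Finset V) (v : V) :
    (∑ u ∈ N, Finsupp.single u 1 : V →₀ ℕ) v = if v ∈ N then 1 else 0 := by
  classical
  simp [Finsupp.finsetSum_apply, Finsupp.single_apply]

/-- the induced graph on `S`, without edges inside `R` and without the edges of `M` -/
def subG (G : SimpleGraph V) (S R : Finset V) (M : SimpleGraph V) : SimpleGraph V where
  Adj u v := G.Adj u v ∧ u ∈ S ∧ v ∈ S ∧ ¬ (u ∈ R ∧ v ∈ R) ∧ ¬ M.Adj u v
  symm := ⟨fun u v h => ⟨h.1.symm, h.2.2.1, h.2.1, fun t => h.2.2.2.1 ⟨t.2, t.1⟩,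
    fun t => h.2.2.2.2 t.symm⟩⟩
  loopless := ⟨fun u h => G.irrefl h.1⟩

structure NiceW (G : SimpleGraph V) (S : Finset V) (B : Set V) (R : Finset V)
    (M : SimpleGraph V) (η : V →₀ ℕ) : Prop where
  le : M ≤ G
  mat : ∀ u v w, M.Adj u v → M.Adj u w → v = w
  memS : ∀ u v, M.Adj u v → u ∈ S
  memR : ∀ u v, M.Adj u v → u ∉ R
  supp : ∀ v, v ∉ S → η v = 0
  zeroR : ∀ v ∈ R, η v = 0
  b2 : ∀ v ∈ S, v ∈ B → η v ≤ 2
  b1 : ∀ v ∈ S, v ∈ B → ∀ u, M.Adj v u → η v ≤ 1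
  b3 : ∀ v, η v ≤ 3
  nv : coeff η (graphPoly (subG G S R M)) ≠ 0

def Nice (G : SimpleGraph V) (S : Finset V) (B : Set V) (R : Finset V) : Prop :=
  ∃ M η, NiceW G S B R M η

variable {G : SimpleGraph V} {S R : Finset V} {B B' : Set V}

lemma nice_empty : Nice G ∅ B ∅ := by
  refine ⟨⊥, 0, bot_le, ?_, ?_, ?_, ?_, ?_, ?_, ?_, ?_, ?_⟩ <;> try simp
  unfold graphPoly
  simp [subG]

lemma nice_weaken {v : V} (h : Nice G S B {v}) : Nice G S B ∅ := by
  obtain ⟨M, η, h⟩ := h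
  refine ⟨M, η, h.le, h.mat, h.memS, by simp, h.supp, by simp, h.b2, h.b1, h.b3, ?_⟩
  have : subG G S ∅ M = subG G S {v} M := by
    ext a b
    simp only [subG, Finset.notMem_empty, Finset.mem_singleton]
    constructor
    · rintro ⟨h1, h2, h3, -, h5⟩
      refine ⟨h1, h2, h3, ?_, h5⟩
      rintro ⟨rfl, rfl⟩; exact G.irrefl h1
    · rintro ⟨h1, h2, h3, -, h5⟩
      exact ⟨h1, h2, h3, by simp, h5⟩
  rw [this]; exact h.nv

/-- adding back the edge `v z` when passing from roots `v, z` to root `v` -/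
lemma nice_addroot {v z : V} (hv : v ∈ S) (hz : z ∈ S) (hvz : G.Adj v z)
    (h : Nice G S B {v, z}) : Nice G S B {v} := by
  obtain ⟨M, η, h⟩ := h
  have hne : z ≠ v := hvz.ne'
  have hMz : ∀ u, ¬ M.Adj z u := fun u hu => h.memR _ _ hu (by simp)
  have hMv : ∀ u, ¬ M.Adj v u := fun u hu => h.memR _ _ hu (by simp)
  have ηz := h.zeroR z (by simp)
  have ηv := h.zeroR v (by simp)
  have hval : ∀ u, (η + Finsupp.single z 1 : V →₀ ℕ) u = if u = z then 1 else η u := by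
    intro u
    by_cases hu : u = z
    · subst hu; simp [ηz]
    · simp [hu]
  refine ⟨M, η + Finsupp.single z 1, h.le, h.mat, h.memS, ?_, ?_, ?_, ?_, ?_, ?_, ?_⟩
  · intro u w hu hm; exact h.memR u w hu (by simp at hm ⊢; exact Or.inl hm)
  · intro u hu; rw [hval, if_neg (by rintro rfl; exact hu hz)]; exact h.supp u hu
  · intro u hu
    rw [Finset.mem_singleton] at hu; subst hu
    rw [hval, if_neg hne.symm]; exact ηv
  · intro u hu hb; rw [hval]; split_ifs
    · omega
    · exact h.b2 u hu hb
  · intro u hu hb w hw; rw [hval, if_neg (by rintro rfl; exact hMz _ hw)]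
    exact h.b1 u hu hb w hw
  · intro u; rw [hval]; split_ifs
    · omega
    · exact h.b3 u
  · -- one more edge
    have hstar : ∃ ε : ℝ, ε ≠ 0 ∧ graphPoly (subG G S {v} M) =
        C ε * (graphPoly (subG G S {v, z} M) * (X z - X v)) := by
      classical
      have e : ∃ K : SimpleGraph V, ∀ a b, K.Adj a b ↔ (a = z ∧ b = v) ∨ (a = v ∧ b = z) :=
        ⟨⟨fun a b => (a = z ∧ b = v) ∨ (a = v ∧ b = z), ⟨by intro a b; tauto⟩,
          ⟨by rintro a (⟨rfl, h9⟩ | ⟨rfl, h9⟩); exacts [hne h9, hne h9.symm]⟩⟩, fun a b => Iff.rfl⟩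
      obtain ⟨K, hK⟩ := e
      obtain ⟨ε, h0, hε⟩ := gp_star K ⊥ z {v} (by simpa using hne) (by
        intro a b; rw [hK]; simp; tauto) (by simp)
      refine ⟨ε, h0, ?_⟩
      rw [gp_mul (subG G S {v} M) (subG G S {v, z} M) K, hε]
      · have : graphPoly (⊥ : SimpleGraph V) = 1 := by unfold graphPoly; simp
        rw [this]; simp; ring
      · intro a b
        rw [hK]
        simp only [subG, Finset.mem_singleton, Finset.mem_insert]
        constructor
        · rintro ⟨h1, h2, h3, h4, h5⟩
          by_cases hh : (a = z ∧ b = v) ∨ (a = v ∧ b = z)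
          · exact Or.inr hh
          · refine Or.inl ⟨h1, h2, h3, ?_, h5⟩
            rintro ⟨rfl | rfl, rfl | rfl⟩
            · exact G.irrefl h1
            · exact hh (Or.inr ⟨rfl, rfl⟩)
            · exact hh (Or.inl ⟨rfl, rfl⟩)
            · exact G.irrefl h1
        · rintro (⟨h1, h2, h3, h4, h5⟩ | ⟨rfl, rfl⟩ | ⟨rfl, rfl⟩)
          · exact ⟨h1, h2, h3, fun t => h4 ⟨Or.inl t.1, Or.inl t.2⟩, h5⟩
          · exact ⟨hvz.symm, hz, hv, fun t => hne t.1, hMz _⟩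
          · exact ⟨hvz, hv, hz, fun t => hne t.2, hMv _⟩
      · intro a b h1
        rw [hK]
        rintro (⟨rfl, rfl⟩ | ⟨rfl, rfl⟩) <;> simp [subG] at h1
    obtain ⟨ε, h0, hε⟩ := hstar
    rw [hε, coeff_C_mul, nv_edge _ _ _ hne _ ηv]
    exact mul_ne_zero h0 h.nv

/-- factorization when deleting a vertex `z` -/
lemma gp_del (z : V) (hz : z ∈ S) (R' : Finset V) (hR' : ∀ u, u ≠ z → (u ∈ R' ↔ u ∈ R))
    (M M' : SimpleGraph V)
    (hM : ∀ a b, a ≠ z → b ≠ z → (M.Adj a b ↔ M'.Adj a b)) (N : Finset V)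
    (hN : ∀ u, u ∈ N ↔ u ∈ S ∧ G.Adj z u ∧ ¬ (z ∈ R ∧ u ∈ R) ∧ ¬ M.Adj z u) :
    ∃ ε : ℝ, ε ≠ 0 ∧ graphPoly (subG G S R M) =
      C ε * (graphPoly (subG G (S.erase z) R' M') * ∏ u ∈ N, (X z - X u)) := by
  have hzN : z ∉ N := fun h => G.irrefl ((hN z).1 h).2.1
  apply gp_star _ _ _ _ hzN
  · intro a b
    simp only [subG, hN, Finset.mem_erase]
    by_cases ha : a = z
    · subst ha
      by_cases hb : b = a
      · subst hb; simp
      · simp only [ne_eq, not_true_eq_false, false_and, and_false, false_or, true_and, hb, or_false]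
        tauto
    · by_cases hb : b = z
      · subst hb
        simp only [ne_eq, not_true_eq_false, false_and, and_false, false_or, true_and, ha,
          G.adj_comm a, M.adj_comm a]
        tauto
      · rw [hR' a ha, hR' b hb, hM a b ha hb]; simp [ha, hb]
  · intro u hu
    simp [subG] at hu

lemma nice_del0 {v : V} (hv : v ∈ S) (hvB : v ∈ R ∨ v ∉ B)
    (hN : ∀ u ∈ S, G.Adj v u → (u ∈ B ∨ u ∈ R) → (u ∈ R ∧ v ∈ R))
    (hB' : ∀ u ∈ S, (u ∈ B ∨ G.Adj v u) → u ∈ B')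
    (h : Nice G (S.erase v) B' (R.erase v)) : Nice G S B R := by
  classical
  obtain ⟨M, η, h⟩ := h
  set N : Finset V := S.filter (fun u => G.Adj v u ∧ ¬ (v ∈ R ∧ u ∈ R)) with hNdef
  have memN : ∀ u, u ∈ N ↔ u ∈ S ∧ G.Adj v u ∧ ¬ (v ∈ R ∧ u ∈ R) := fun u => by simp [N]
  have hMv : ∀ u, ¬ M.Adj v u := fun u hu => by simpa using h.memS _ _ hu
  have ηv : η v = 0 := h.supp v (by simp)
  have hvN : v ∉ N := fun h => G.irrefl ((memN v).1 h).2.1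
  have hval : ∀ u, (η + ∑ u ∈ N, Finsupp.single u 1 : V →₀ ℕ) u = 
      η u + if u ∈ N then 1 else 0 := fun u => by rw [Finsupp.add_apply, sum_single_apply']
  have NB : ∀ u ∈ N, u ∉ B ∧ u ∉ R := by
    intro u hu
    obtain ⟨h1, h2, h3⟩ := (memN u).1 hu
    have := hN u h1 h2
    tauto
  refine ⟨M, η + ∑ u ∈ N, Finsupp.single u 1, h.le, h.mat, ?_, ?_, ?_, ?_, ?_, ?_, ?_, ?_⟩
  · intro u w hu; exact Finset.mem_of_mem_erase (h.memS u w hu)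
  · intro u w hu hR
    refine h.memR u w hu (Finset.mem_erase.2 ⟨?_, hR⟩)
    rintro rfl; exact hMv _ hu
  · intro u hu
    rw [hval, if_neg (fun t => hu ((memN u).1 t).1), h.supp u (fun t => hu (Finset.mem_of_mem_erase t))]
  · intro u hu
    rw [hval, if_neg (fun t => (NB u t).2 hu)]
    by_cases huv : u = v
    · subst huv; rw [ηv]
    · rw [h.zeroR u (Finset.mem_erase.2 ⟨huv, hu⟩)]
  · intro u hu hb
    rw [hval, if_neg (fun t => (NB u t).1 hb)]
    by_cases huv : u = v
    · subst huv; omega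
    · have := h.b2 u (Finset.mem_erase.2 ⟨huv, hu⟩) (hB' u hu (Or.inl hb)); omega
  · intro u hu hb w hw
    rw [hval, if_neg (fun t => (NB u t).1 hb)]
    by_cases huv : u = v
    · subst huv; omega
    · have := h.b1 u (Finset.mem_erase.2 ⟨huv, hu⟩) (hB' u hu (Or.inl hb)) w hw; omega
  · intro u
    rw [hval]
    split_ifs with hu
    · have h1 := (memN u).1 hu
      have := h.b2 u (Finset.mem_erase.2 ⟨h1.2.1.ne', h1.1⟩) (hB' u h1.1 (Or.inr h1.2.1)); omega
    · have := h.b3 u; omega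
  · obtain ⟨ε, h0, hε⟩ := gp_del (G := G) (R := R) v hv (R.erase v) (fun u hu => by simp [hu]) M M
      (fun _ _ _ _ => Iff.rfl) N (fun u => by rw [memN]; simp [hMv])
    obtain ⟨δ, d0, hδ⟩ := nv_star0 (graphPoly (subG G (S.erase v) (R.erase v) M)) v N hvN η ηv
    rw [hε, coeff_C_mul, hδ]
    exact mul_ne_zero h0 (mul_ne_zero d0 h.nv)

lemma nice_delz {z : V} (hz : z ∈ S) (hzR : z ∉ R) (hR : R.card ≤ 2)
    (hN : ∀ u ∈ S, G.Adj z u → u ∈ B → u ∈ R)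
    (hB' : ∀ u ∈ S, (u ∈ B ∨ G.Adj z u) → u ∈ B')
    (h : Nice G (S.erase z) B' R) : Nice G S B R := by
  classical
  obtain ⟨M, η, h⟩ := h
  set U : Finset V := S.filter (fun u => G.Adj z u ∧ u ∉ R) with hU
  set Q : Finset V := S.filter (fun u => G.Adj z u ∧ u ∈ R) with hQ
  have memU : ∀ u, u ∈ U ↔ u ∈ S ∧ G.Adj z u ∧ u ∉ R := fun u => by simp [U]
  have memQ : ∀ u, u ∈ Q ↔ u ∈ S ∧ G.Adj z u ∧ u ∈ R := fun u => by simp [Q]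
  have hMv : ∀ u, ¬ M.Adj z u := fun u hu => by simpa using h.memS _ _ hu
  have ηz : η z = 0 := h.supp z (by simp)
  have hzU : z ∉ U := fun h => G.irrefl ((memU z).1 h).2.1
  have hzQ : z ∉ Q := fun h => G.irrefl ((memQ z).1 h).2.1
  have hUQ : Disjoint U Q := by
    rw [Finset.disjoint_left]; intro u h1 h2
    exact ((memU u).1 h1).2.2 ((memQ u).1 h2).2.2
  have cQ : Q.card ≤ 2 := by
    refine (Finset.card_le_card ?_).trans hR
    intro u hu; exact ((memQ u).1 hu).2.2
  have hval : ∀ u, (η + ∑ u ∈ U, Finsupp.single u 1 + Finsupp.single z Q.card : V →₀ ℕ) u = 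
      if u = z then Q.card else η u + if u ∈ U then 1 else 0 := fun u => by
    rw [Finsupp.add_apply, Finsupp.add_apply, sum_single_apply']
    by_cases hu : u = z
    · subst hu; simp [ηz, hzU]
    · simp [hu]
  have NB : ∀ u ∈ U, u ∉ B ∧ u ∉ R := by
    intro u hu
    obtain ⟨h1, h2, h3⟩ := (memU u).1 hu
    have := hN u h1 h2
    tauto
  refine ⟨M, η + ∑ u ∈ U, Finsupp.single u 1 + Finsupp.single z Q.card, h.le, h.mat,
    ?_, h.memR, ?_, ?_, ?_, ?_, ?_, ?_⟩
  · intro u w hu; exact Finset.mem_of_mem_erase (h.memS u w hu)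
  · intro u hu
    rw [hval, if_neg (by rintro rfl; exact hu hz),
      if_neg (fun t => hu ((memU u).1 t).1), h.supp u (fun t => hu (Finset.mem_of_mem_erase t))]
  · intro u hu
    rw [hval, if_neg (by rintro rfl; exact hzR hu), if_neg (fun t => (NB u t).2 hu), h.zeroR u hu]
  · intro u hu hb
    rw [hval, if_neg (fun t => (NB u t).1 hb)]
    split_ifs with huv
    · exact cQ
    · have := h.b2 u (Finset.mem_erase.2 ⟨huv, hu⟩) (hB' u hu (Or.inl hb)); omega
  · intro u hu hb w hw
    rw [hval, if_neg (fun t => (NB u t).1 hb)]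
    split_ifs with huv
    · subst huv; exact absurd hw (hMv _)
    · have := h.b1 u (Finset.mem_erase.2 ⟨huv, hu⟩) (hB' u hu (Or.inl hb)) w hw; omega
  · intro u
    rw [hval]
    split_ifs with hu hu'
    · omega
    · have h1 := (memU u).1 hu'
      have := h.b2 u (Finset.mem_erase.2 ⟨hu, h1.1⟩) (hB' u h1.1 (Or.inr h1.2.1)); omega
    · have := h.b3 u; omega
  · obtain ⟨ε, h0, hε⟩ := gp_del (G := G) (R := R) z hz R (fun u hu => Iff.rfl) M M
      (fun _ _ _ _ => Iff.rfl) (U ∪ Q) (fun u => by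
        rw [Finset.mem_union, memU, memQ]; simp [hMv, hzR]; tauto)
    obtain ⟨δ, d0, hδ⟩ := nv_star0 (graphPoly (subG G (S.erase z) R M)) z U hzU η ηz
    rw [hε, coeff_C_mul, Finset.prod_union hUQ, ← mul_assoc, nv_edges _ _ _ hzQ, hδ]
    · exact mul_ne_zero h0 (mul_ne_zero d0 h.nv)
    · intro u hu
      have := (memQ u).1 hu
      rw [Finsupp.add_apply, sum_single_apply', h.zeroR u this.2.2, if_neg (fun t => (NB u t).2 this.2.2)]


lemma nice_finish {z v : V} {M M0 : SimpleGraph V} {τ : V →₀ ℕ} {N : Finset V}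
    (hz : z ∈ S) (hzR : z ∉ R) (hvS : v ∈ S) (hv : v ∈ R) (hzv : G.Adj z v)
    (le : M ≤ G) (mat : ∀ u v w, M.Adj u v → M.Adj u w → v = w)
    (memS : ∀ u v, M.Adj u v → u ∈ S) (memR : ∀ u v, M.Adj u v → u ∉ R)
    (hM : ∀ a b, a ≠ z → b ≠ z → (M.Adj a b ↔ M0.Adj a b))
    (hN : ∀ u, u ∈ N ↔ u ∈ S ∧ G.Adj z u ∧ u ≠ v ∧ ¬ M.Adj z u)
    (hNR : ∀ u ∈ N, u ∉ R)
    (supp : ∀ u, u ∉ S.erase z → τ u = 0) (zeroR : ∀ u ∈ R, τ u = 0)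
    (b2 : ∀ u ∈ S, u ≠ z → u ∈ B → τ u + (if u ∈ N then 1 else 0) ≤ 2)
    (b1 : ∀ u ∈ S, u ≠ z → u ∈ B → ∀ w, M.Adj u w → τ u + (if u ∈ N then 1 else 0) ≤ 1)
    (b3 : ∀ u, τ u + (if u ∈ N then 1 else 0) ≤ 3)
    (nv : coeff τ (graphPoly (subG G (S.erase z) R M0)) ≠ 0) : Nice G S B R := by
  classical
  have τz : τ z = 0 := supp z (by simp)
  have hzN : z ∉ N := fun h => G.irrefl ((hN z).1 h).2.1
  have hvN : v ∉ N := fun h => ((hN v).1 h).2.2.1 rfl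
  have hval : ∀ u, (τ + ∑ u ∈ N, Finsupp.single u 1 + Finsupp.single z 1 : V →₀ ℕ) u = 
      if u = z then 1 else τ u + if u ∈ N then 1 else 0 := fun u => by
    rw [Finsupp.add_apply, Finsupp.add_apply, sum_single_apply']
    by_cases hu : u = z
    · subst hu; simp [τz, hzN]
    · simp [hu]
  refine ⟨M, τ + ∑ u ∈ N, Finsupp.single u 1 + Finsupp.single z 1, le, mat, memS, memR,
    ?_, ?_, ?_, ?_, ?_, ?_⟩
  · intro u hu
    rw [hval, if_neg (by rintro rfl; exact hu hz),
      if_neg (fun t => hu ((hN u).1 t).1), supp u (fun t => hu (Finset.mem_of_mem_erase t))]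
  · intro u hu
    rw [hval, if_neg (by rintro rfl; exact hzR hu), if_neg (fun t => hNR u t hu), zeroR u hu]
  · intro u hu hb
    rw [hval]
    split_ifs with h1 h2
    · omega
    · have := b2 u hu h1 hb; rw [if_pos h2] at this; exact this
    · have := b2 u hu h1 hb; rw [if_neg h2] at this; exact this
  · intro u hu hb w hw
    rw [hval]
    by_cases h1 : u = z
    · rw [if_pos h1]
    · rw [if_neg h1]; exact b1 u hu h1 hb w hw
  · intro u
    rw [hval]
    by_cases h1 : u = z
    · rw [if_pos h1]; omega
    · rw [if_neg h1]; exact b3 u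
  · obtain ⟨ε, h0, hε⟩ := gp_del (G := G) (R := R) z hz R (fun u hu => Iff.rfl) M M0
      hM (insert v N) (fun u => by
        rw [Finset.mem_insert, hN]
        constructor
        · rintro (rfl | h)
          · exact ⟨hvS, hzv, fun t => hzR t.1, fun t => memR _ _ t.symm hv⟩
          · exact ⟨h.1, h.2.1, fun t => hzR t.1, h.2.2.2⟩
        · rintro ⟨h1, h2, h3, h4⟩
          by_cases huv : u = v
          · exact Or.inl huv
          · exact Or.inr ⟨h1, h2, huv, h4⟩)
    obtain ⟨δ, d0, hδ⟩ := nv_star0 (graphPoly (subG G (S.erase z) R M0)) z N hzN τ τz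
    rw [hε, coeff_C_mul, Finset.prod_insert hvN, mul_comm (X z - X v), ← mul_assoc,
      nv_edge _ _ _ hzv.ne, hδ]
    · exact mul_ne_zero h0 (mul_ne_zero d0 nv)
    · rw [Finsupp.add_apply, sum_single_apply', zeroR v hv, if_neg hvN]

lemma nice_trick {z v w : V} (hz : z ∈ S) (hzR : z ∉ R) (hvS : v ∈ S) (hvR : v ∈ R)
    (hzv : G.Adj z v) (hwS : w ∈ S) (hwR : w ∉ R) (hzw : G.Adj z w) (hwB : w ∈ B)
    (hN : ∀ u ∈ S, G.Adj z u → (u ∈ B ∨ u ∈ R) → u = v ∨ u = w)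
    (hB' : ∀ u ∈ S, (u ∈ B ∨ G.Adj z u) → u ∈ B')
    (h : Nice G (S.erase z) B' R) : Nice G S B R := by
  classical
  have hwv : w ≠ v := by rintro rfl; exact hwR hvR
  have hwB' : w ∈ B' := hB' w hwS (Or.inl hwB)
  have hwS' : w ∈ S.erase z := Finset.mem_erase.2 ⟨hzw.ne', hwS⟩
  set N : Finset V := S.filter (fun u => G.Adj z u ∧ u ≠ v) with hNd
  have memN : ∀ u, u ∈ N ↔ u ∈ S ∧ G.Adj z u ∧ u ≠ v := fun u => by simp [N]
  set U : Finset V := N.erase w with hU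
  have memU : ∀ u, u ∈ U ↔ u ≠ w ∧ u ∈ S ∧ G.Adj z u ∧ u ≠ v := fun u => by
    rw [hU, Finset.mem_erase, memN]
  have hwN : w ∈ N := (memN w).2 ⟨hwS, hzw, hwv⟩
  have NR : ∀ u ∈ N, u ∉ R := by
    intro u hu hR
    obtain ⟨h1, h2, h3⟩ := (memN u).1 hu
    rcases hN u h1 h2 (Or.inr hR) with rfl | rfl
    · exact h3 rfl
    · exact hwR hR
  have UB : ∀ u ∈ U, u ∉ B := by
    intro u hu hR
    obtain ⟨h0, h1, h2, h3⟩ := (memU u).1 hu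
    rcases hN u h1 h2 (Or.inl hR) with rfl | rfl
    · exact h3 rfl
    · exact h0 rfl
  have NB : ∀ u ∈ B, u ≠ w → u ∉ N := fun u hu huw t => UB u (Finset.mem_erase.2 ⟨huw, t⟩) hu
  have NB' : ∀ u ∈ N, u ∈ S.erase z ∧ u ∈ B' := by
    intro u hu
    obtain ⟨h1, h2, h3⟩ := (memN u).1 hu
    exact ⟨Finset.mem_erase.2 ⟨h2.ne', h1⟩, hB' u h1 (Or.inr h2)⟩
  -- case 1
  by_cases hcase : ∃ M η, NiceW G (S.erase z) B' R M η ∧ η w ≤ 1 ∧ (∀ u, M.Adj w u → η w = 0)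
  · obtain ⟨M, η, h, hw1, hw0⟩ := hcase
    have hMz : ∀ u, ¬ M.Adj z u := fun u hu => by simpa using h.memS _ _ hu
    refine nice_finish (M := M) (M0 := M) (τ := η) (N := N) hz hzR hvS hvR hzv h.le h.mat
      (fun u t hu => Finset.mem_of_mem_erase (h.memS u t hu)) h.memR (fun _ _ _ _ => Iff.rfl)
      (fun u => by rw [memN]; simp [hMz]) NR h.supp h.zeroR ?_ ?_ ?_ h.nv
    · intro u hu huz hb
      by_cases huw : u = w
      · subst huw; rw [if_pos hwN]; omega
      · rw [if_neg (NB u hb huw)]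
        exact h.b2 u (Finset.mem_erase.2 ⟨huz, hu⟩) (hB' u hu (Or.inl hb))
    · intro u hu huz hb t ht
      by_cases huw : u = w
      · subst huw; rw [if_pos hwN, hw0 t ht]
      · rw [if_neg (NB u hb huw)]
        exact h.b1 u (Finset.mem_erase.2 ⟨huz, hu⟩) (hB' u hu (Or.inl hb)) t ht
    · intro u
      split_ifs with hu
      · have := h.b2 u (NB' u hu).1 (NB' u hu).2; omega
      · exact h.b3 u
  -- case 2
  obtain ⟨M, η, h⟩ := h
  have hMz : ∀ u, ¬ M.Adj z u := fun u hu => by simpa using h.memS _ _ hu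
  have ηz : η z = 0 := h.supp z (by simp)
  have hzU : z ∉ U := fun h => G.irrefl ((memU z).1 h).2.2.1
  have hwU : w ∉ U := fun h => ((memU w).1 h).1 rfl
  have hvU : v ∉ U := fun h => ((memU v).1 h).2.2.2 rfl
  set f := graphPoly (subG G (S.erase z) R M) with hf
  by_cases htar : coeff (η + ∑ u ∈ U, Finsupp.single u 1 + Finsupp.single z 1)
      ((f * ∏ u ∈ U, (X z - X u)) * (X z - X w)) = 0
  · obtain ⟨κ, hκ, u, hu, hn⟩ := nv_trick f z w U hzU hzw.ne η ηz
      (gp_vars _ z (fun t ht => by simp [subG] at ht)) h.nv hwU htar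
    have hκv : ∀ t, κ t + (if t = w then 1 else 0) = η t := by
      intro t
      rw [← hκ, Finsupp.add_apply, Finsupp.single_apply]
      simp only [eq_comm]
    obtain ⟨huw, huS, huz, huv⟩ := (memU u).1 hu
    have huR : u ∉ R := NR u (Finset.mem_of_mem_erase hu)
    have huN : u ∈ N := Finset.mem_of_mem_erase hu
    set τ : V →₀ ℕ := κ + Finsupp.single u 1 with hτ
    have hτv : ∀ t, τ t = κ t + (if t = u then 1 else 0) := by
      intro t
      rw [hτ, Finsupp.add_apply, Finsupp.single_apply]
      simp only [eq_comm]
    have τu : τ u = η u + 1 := by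
      rw [hτv, if_pos rfl, ← hκv u, if_neg huw]
    have τw : τ w + 1 = η w := by
      rw [hτv, if_neg (Ne.symm huw), ← hκv w, if_pos rfl]
    have τo : ∀ t, t ≠ u → t ≠ w → τ t = η t := by
      intro t h1 h2
      rw [hτv, if_neg h1, ← hκv t, if_neg h2]
    have hη2w := h.b2 w hwS' hwB'
    have hη2u := h.b2 u (NB' u huN).1 (NB' u huN).2
    have hη1u := h.b1 u (NB' u huN).1 (NB' u huN).2
    have hη1w := h.b1 w hwS' hwB'
    have τsupp : ∀ t, t ∉ S.erase z → τ t = 0 := by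
      intro t ht
      rw [τo t (by rintro rfl; exact ht (NB' _ huN).1) (by rintro rfl; exact ht hwS')]
      exact h.supp t ht
    have τR : ∀ t ∈ R, τ t = 0 := by
      intro t ht
      rw [τo t (by rintro rfl; exact huR ht) (by rintro rfl; exact hwR ht)]
      exact h.zeroR t ht
    by_cases hcov : ∃ t, M.Adj u t
    · obtain ⟨t0, ht0⟩ := hcov
      have hu1 := hη1u t0 ht0
      refine nice_finish (M := M) (M0 := M) (τ := τ) (N := N) hz hzR hvS hvR hzv h.le h.mat
        (fun u t hu => Finset.mem_of_mem_erase (h.memS u t hu)) h.memR (fun _ _ _ _ => Iff.rfl)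
        (fun u => by rw [memN]; simp [hMz]) NR τsupp τR ?_ ?_ ?_ hn
      · intro x hx hxz hb
        by_cases hxw : x = w
        · subst hxw; rw [if_pos hwN]; omega
        · rw [if_neg (NB x hb hxw), τo x (by rintro rfl; exact UB _ hu hb) hxw]
          exact h.b2 x (Finset.mem_erase.2 ⟨hxz, hx⟩) (hB' x hx (Or.inl hb))
      · intro x hx hxz hb t ht
        by_cases hxw : x = w
        · subst hxw; rw [if_pos hwN]; have := hη1w t ht; omega
        · rw [if_neg (NB x hb hxw), τo x (by rintro rfl; exact UB _ hu hb) hxw]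
          exact h.b1 x (Finset.mem_erase.2 ⟨hxz, hx⟩) (hB' x hx (Or.inl hb)) t ht
      · intro x
        by_cases hxu : x = u
        · subst hxu; split_ifs <;> omega
        by_cases hxw : x = w
        · subst hxw; split_ifs <;> omega
        rw [τo x hxu hxw]
        split_ifs with hx
        · have := h.b2 x (NB' x hx).1 (NB' x hx).2; omega
        · exact h.b3 x
    · push Not at hcov
      -- `τ` itself is not nice, hence `η u = 2`; add the edge `z u` to the matching
      have e : ∃ K : SimpleGraph V, ∀ a b, K.Adj a b ↔
          M.Adj a b ∨ (a = z ∧ b = u) ∨ (a = u ∧ b = z) :=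
        ⟨⟨fun a b => M.Adj a b ∨ (a = z ∧ b = u) ∨ (a = u ∧ b = z),
          ⟨by intro a b; rw [M.adj_comm a b]; tauto⟩,
          ⟨by
            rintro a (h9 | ⟨rfl, h9⟩ | ⟨rfl, h9⟩)
            exacts [M.irrefl h9, huz.ne h9, huz.ne h9.symm]⟩⟩, fun a b => Iff.rfl⟩
      obtain ⟨K, hK⟩ := e
      refine nice_finish (M := K) (M0 := M) (τ := τ) (N := N.erase u) hz hzR hvS hvR hzv
        ?_ ?_ ?_ ?_ ?_ ?_ (fun x hx => NR x (Finset.mem_of_mem_erase hx)) τsupp τR ?_ ?_ ?_ hn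
      · intro a b hab
        rcases (hK a b).1 hab with h9 | ⟨rfl, rfl⟩ | ⟨rfl, rfl⟩
        exacts [h.le h9, huz, huz.symm]
      · intro a b c hab hac
        rcases (hK a b).1 hab with h1 | ⟨rfl, rfl⟩ | ⟨rfl, rfl⟩ <;>
          rcases (hK a c).1 hac with h2 | ⟨h2, rfl⟩ | ⟨h2, rfl⟩
        · exact h.mat _ _ _ h1 h2
        · subst h2; exact absurd h1 (hMz _)
        · subst h2; exact absurd h1 (hcov _)
        · exact absurd h2 (hMz _)
        · rfl
        · exact h2.symm
        · exact absurd h2 (hcov _)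
        · exact h2.symm
        · rfl
      · intro a b hab
        rcases (hK a b).1 hab with h9 | ⟨rfl, rfl⟩ | ⟨rfl, rfl⟩
        exacts [Finset.mem_of_mem_erase (h.memS _ _ h9), hz, huS]
      · intro a b hab
        rcases (hK a b).1 hab with h9 | ⟨rfl, rfl⟩ | ⟨rfl, rfl⟩
        exacts [h.memR _ _ h9, hzR, huR]
      · intro a b ha hb
        rw [hK]; simp [ha, hb]
      · intro x
        rw [Finset.mem_erase, memN, hK]
        simp only [hMz, true_and, false_or, not_or, not_and]
        constructor
        · rintro ⟨h1, h2, h3, h4⟩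
          exact ⟨h2, h3, h4, h1, fun t => absurd t huz.ne⟩
        · rintro ⟨h2, h3, h4, h1, -⟩
          exact ⟨h1, h2, h3, h4⟩
      · intro x hx hxz hb
        by_cases hxw : x = w
        · subst hxw; split_ifs <;> omega
        · rw [if_neg (fun t => NB x hb hxw (Finset.mem_of_mem_erase t)),
            τo x (by rintro rfl; exact UB _ hu hb) hxw]
          exact h.b2 x (Finset.mem_erase.2 ⟨hxz, hx⟩) (hB' x hx (Or.inl hb))
      · intro x hx hxz hb t ht
        have hxu : x ≠ u := by rintro rfl; exact UB _ hu hb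
        have ht' : M.Adj x t := by
          rcases (hK x t).1 ht with h9 | ⟨h9, -⟩ | ⟨h9, -⟩
          exacts [h9, absurd h9 hxz, absurd h9 hxu]
        by_cases hxw : x = w
        · subst hxw; have := hη1w t ht'; split_ifs <;> omega
        · rw [if_neg (fun t => NB x hb hxw (Finset.mem_of_mem_erase t)), τo x hxu hxw]
          exact h.b1 x (Finset.mem_erase.2 ⟨hxz, hx⟩) (hB' x hx (Or.inl hb)) t ht'
      · intro x
        by_cases hxu : x = u
        · subst hxu; rw [if_neg (by simp)]; omega
        by_cases hxw : x = w
        · subst hxw; split_ifs <;> omega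
        rw [τo x hxu hxw]
        split_ifs with hx
        · have hx' := NB' x (Finset.mem_of_mem_erase hx)
          have := h.b2 x hx'.1 hx'.2; omega
        · exact h.b3 x
  · -- the monomial `η + U + 2z` survives
    have hval : ∀ u, (η + ∑ u ∈ U, Finsupp.single u 1 + Finsupp.single z 1 + Finsupp.single z 1 :
        V →₀ ℕ) u = if u = z then 2 else η u + if u ∈ U then 1 else 0 := fun u => by
      rw [Finsupp.add_apply, Finsupp.add_apply, Finsupp.add_apply, sum_single_apply']
      by_cases hu : u = z
      · subst hu; simp [ηz, hzU]
      · simp [hu]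
    refine ⟨M, η + ∑ u ∈ U, Finsupp.single u 1 + Finsupp.single z 1 + Finsupp.single z 1,
      h.le, h.mat, ?_, h.memR, ?_, ?_, ?_, ?_, ?_, ?_⟩
    · intro u w hu; exact Finset.mem_of_mem_erase (h.memS u w hu)
    · intro u hu
      rw [hval, if_neg (by rintro rfl; exact hu hz),
        if_neg (fun t => hu ((memU u).1 t).2.1), h.supp u (fun t => hu (Finset.mem_of_mem_erase t))]
    · intro u hu
      rw [hval, if_neg (by rintro rfl; exact hzR hu),
        if_neg (fun t => NR u (Finset.mem_of_mem_erase t) hu), h.zeroR u hu]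
    · intro u hu hb
      rw [hval, if_neg (fun t => UB u t hb)]
      split_ifs with huv
      · omega
      · have := h.b2 u (Finset.mem_erase.2 ⟨huv, hu⟩) (hB' u hu (Or.inl hb)); omega
    · intro u hu hb w hw
      rw [hval, if_neg (fun t => UB u t hb)]
      split_ifs with huv
      · subst huv; exact absurd hw (hMz _)
      · have := h.b1 u (Finset.mem_erase.2 ⟨huv, hu⟩) (hB' u hu (Or.inl hb)) w hw; omega
    · intro u
      rw [hval]
      split_ifs with hu hu'
      · omega
      · have h1 := NB' u (Finset.mem_of_mem_erase hu')
        have := h.b2 u h1.1 h1.2; omega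
      · have := h.b3 u; omega
    · have hvi : v ∉ insert w U := by
        rw [Finset.mem_insert, not_or]; exact ⟨hwv.symm, hvU⟩
      obtain ⟨ε, h0, hε⟩ := gp_del (G := G) (R := R) z hz R (fun u hu => Iff.rfl) M M
        (fun _ _ _ _ => Iff.rfl) (insert v (insert w U)) (fun u => by
          rw [Finset.mem_insert, Finset.mem_insert, memU]
          constructor
          · rintro (rfl | rfl | h9)
            · exact ⟨hvS, hzv, fun t => hzR t.1, hMz _⟩
            · exact ⟨hwS, hzw, fun t => hzR t.1, hMz _⟩
            · exact ⟨h9.2.1, h9.2.2.1, fun t => hzR t.1, hMz _⟩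
          · rintro ⟨h1, h2, -, -⟩
            tauto)
      rw [hε, coeff_C_mul, Finset.prod_insert hvi, mul_comm (X z - X v), ← mul_assoc,
        nv_edge _ _ _ hzv.ne, Finset.prod_insert hwU, mul_comm (X z - X w), ← mul_assoc]
      · exact mul_ne_zero h0 htar
      · rw [Finsupp.add_apply, Finsupp.add_apply, sum_single_apply', h.zeroR v hvR, if_neg hvU,
          Finsupp.single_apply, if_neg hzv.ne, add_zero, add_zero]

lemma nice_sep {S1 S2 R2 : Finset V} (hS : ∀ v, v ∈ S ↔ v ∈ S1 ∨ v ∈ S2)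
    (hR2 : ∀ v, v ∈ R2 ↔ v ∈ S1 ∧ v ∈ S2)
    (hR : ∀ v ∈ R, v ∈ S1)
    (hE : ∀ u v, u ∈ S1 → v ∈ S2 → u ∉ S2 → v ∉ S1 → ¬ G.Adj u v)
    (h1 : Nice G S1 B R) (h2 : Nice G S2 B R2) : Nice G S B R := by
  obtain ⟨M1, η1, h1⟩ := h1
  obtain ⟨M2, η2, h2⟩ := h2
  have m2 : ∀ u v, M2.Adj u v → u ∉ S1 := fun u v h h' =>
    h2.memR u v h ((hR2 u).2 ⟨h', h2.memS u v h⟩)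
  have z2 : ∀ v ∈ S1, η2 v = 0 := by
    intro v hv
    by_cases hv2 : v ∈ S2
    · exact h2.zeroR v ((hR2 v).2 ⟨hv, hv2⟩)
    · exact h2.supp v hv2
  have hval1 : ∀ v ∈ S1, (η1 + η2) v = η1 v := fun v hv => by simp [z2 v hv]
  have hval2 : ∀ v, v ∉ S1 → (η1 + η2) v = η2 v := fun v hv => by simp [h1.supp v hv]
  refine ⟨M1 ⊔ M2, η1 + η2, sup_le h1.le h2.le, ?_, ?_, ?_, ?_, ?_, ?_, ?_, ?_, ?_⟩
  · rintro u v w (a | a) (b | b)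
    · exact h1.mat _ _ _ a b
    · exact absurd (h1.memS _ _ a) (m2 _ _ b)
    · exact absurd (h1.memS _ _ b) (m2 _ _ a)
    · exact h2.mat _ _ _ a b
  · rintro u v (a | a)
    · exact (hS u).2 (Or.inl (h1.memS _ _ a))
    · exact (hS u).2 (Or.inr (h2.memS _ _ a))
  · rintro u v (a | a)
    · exact h1.memR _ _ a
    · exact fun hu => m2 _ _ a (hR u hu)
  · intro v hv
    rw [hS, not_or] at hv
    simp [h1.supp v hv.1, h2.supp v hv.2]
  · intro v hv
    rw [hval1 v (hR v hv), h1.zeroR v hv]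
  · intro v hv hb
    by_cases h : v ∈ S1
    · rw [hval1 v h]; exact h1.b2 v h hb
    · rw [hval2 v h]; exact h2.b2 v (((hS v).1 hv).resolve_left h) hb
  · rintro v hv hb u (a | a)
    · rw [hval1 v (h1.memS _ _ a)]; exact h1.b1 v (h1.memS _ _ a) hb u a
    · rw [hval2 v (m2 _ _ a)]; exact h2.b1 v (h2.memS _ _ a) hb u a
  · intro v
    by_cases h : v ∈ S1
    · rw [hval1 v h]; exact h1.b3 v
    · rw [hval2 v h]; exact h2.b3 v
  · rw [gp_mul (subG G S R (M1 ⊔ M2)) (subG G S1 R M1) (subG G S2 R2 M2)]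
    · exact gp_sep _ _ S1 S2 R2 (fun v a b => (hR2 v).2 ⟨a, b⟩) (fun u v (h : (subG G S1 R M1).Adj u v) => h.2.1)
        (fun u v (h : (subG G S2 R2 M2).Adj u v) => h.2.1) η1 η2 h1.supp h2.zeroR h1.nv h2.nv
    · intro u v
      simp only [subG, SimpleGraph.sup_adj, not_or]
      constructor
      · rintro ⟨a, b, c, d, e, f⟩
        by_cases hu : u ∈ S1 <;> by_cases hv : v ∈ S1
        · exact Or.inl ⟨a, hu, hv, d, e⟩
        · have hv2 := ((hS v).1 c).resolve_left hv
          have hu2 : u ∈ S2 := by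
            by_contra hu2; exact hE u v hu hv2 hu2 hv a
          exact Or.inr ⟨a, hu2, hv2, fun t => hv ((hR2 v).1 t.2).1, f⟩
        · have hu2 := ((hS u).1 b).resolve_left hu
          have hv2 : v ∈ S2 := by
            by_contra hv2; exact hE v u hv hu2 hv2 hu a.symm
          exact Or.inr ⟨a, hu2, hv2, fun t => hu ((hR2 u).1 t.1).1, f⟩
        · have hu2 := ((hS u).1 b).resolve_left hu
          have hv2 := ((hS v).1 c).resolve_left hv
          exact Or.inr ⟨a, hu2, hv2, fun t => hu ((hR2 u).1 t.1).1, f⟩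
      · rintro (⟨a, b, c, d, e⟩ | ⟨a, b, c, d, e⟩)
        · exact ⟨a, (hS u).2 (Or.inl b), (hS v).2 (Or.inl c), d, e, fun t => m2 _ _ t b⟩
        · refine ⟨a, (hS u).2 (Or.inr b), (hS v).2 (Or.inr c), fun t => d ?_, fun t => d ?_, e⟩
          · exact ⟨(hR2 u).2 ⟨hR u t.1, b⟩, (hR2 v).2 ⟨hR v t.2, c⟩⟩
          · exact ⟨(hR2 u).2 ⟨h1.memS _ _ t, b⟩, (hR2 v).2 ⟨h1.memS _ _ t.symm, c⟩⟩
    · rintro u v ⟨a, b, c, d, e⟩ ⟨-, b', c', d', -⟩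
      exact d' ⟨(hR2 u).2 ⟨b, b'⟩, (hR2 v).2 ⟨c, c'⟩⟩

def nbS (G : SimpleGraph V) (A : Set V) : Set V := {v | ∃ a ∈ A, G.Adj a v}

lemma inj3 {a b c : V} (hab : a ≠ b) (hac : a ≠ c) (hbc : b ≠ c) :
    Function.Injective ![a, b, c] := by
  intro i j hij
  fin_cases i <;> fin_cases j <;> simp_all

set_option maxHeartbeats 2000000 in
theorem nice_main (hG : G.IsPlanar) : ∀ (n : ℕ) (S R : Finset V) (A : Set V),
    3 * S.card + 2 - R.card ≤ n → CutConn G A → (∀ v ∈ S, v ∉ A) → R ⊆ S →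
    (∀ v ∈ R, v ∈ nbS G A) → (∀ u ∈ R, ∀ v ∈ R, u ≠ v → G.Adj u v) → R.card ≤ 2 →
    Nice G S (nbS G A) R := by
  classical
  intro n
  induction n with
  | zero =>
    intro S R A hn _ _ hRS _ _ hR
    have := Finset.card_le_card hRS
    have hS0 : S.card = 0 := by omega
    omega
  | succ n ih =>
  intro S R A hn hA hSA hRS hRB hRc hR
  have hRScard := Finset.card_le_card hRS
  -- deleting a boundary vertex
  have hAz : ∀ z ∈ S, z ∈ nbS G A → CutConn G (A ∪ {z}) := by
    rintro z hz ⟨a, ha, haz⟩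
    exact hA.union (CutConn.single _ _) (Or.inr ⟨a, ha, z, rfl, haz⟩)
  have hSAz : ∀ z, ∀ v ∈ S.erase z, v ∉ A ∪ {z} := by
    rintro z v hv (h | h)
    · exact hSA v (Finset.mem_of_mem_erase hv) h
    · exact (Finset.mem_erase.1 hv).1 h
  have hBz : ∀ z, ∀ u ∈ S, (u ∈ nbS G A ∨ G.Adj z u) → u ∈ nbS G (A ∪ {z}) := by
    rintro z u _ (⟨a, ha, h⟩ | h)
    · exact ⟨a, Or.inl ha, h⟩
    · exact ⟨z, Or.inr rfl, h⟩
  have ihz : ∀ z ∈ S, z ∈ nbS G A → Nice G (S.erase z) (nbS G (A ∪ {z})) (R.erase z) := by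
    intro z hz hzB
    have c1 := Finset.card_erase_of_mem hz
    have c2 : 0 < S.card := Finset.card_pos.2 ⟨z, hz⟩
    have c3 : (R.erase z).card ≤ R.card := Finset.card_le_card (Finset.erase_subset _ _)
    have c4 : R.card ≤ (R.erase z).card + 1 := by
      have := Finset.pred_card_le_card_erase (s := R) (a := z); omega
    refine ih _ _ _ ?_ (hAz z hz hzB) (hSAz z) (Finset.erase_subset_erase _ hRS) ?_ ?_ ?_
    · omega
    · intro v hv
      exact hBz z v (hRS (Finset.mem_of_mem_erase hv)) (Or.inl (hRB v (Finset.mem_of_mem_erase hv)))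
    · intro u hu v hv
      exact hRc u (Finset.mem_of_mem_erase hu) v (Finset.mem_of_mem_erase hv)
    · omega
  obtain hR0 | hR1 | hR2 : R.card = 0 ∨ R.card = 1 ∨ R.card = 2 := by omega
  · rw [Finset.card_eq_zero] at hR0
    subst hR0
    by_cases hSB : ∃ v ∈ S, v ∈ nbS G A
    · obtain ⟨v, hv, hvB⟩ := hSB
      apply nice_weaken (v := v)
      apply ih _ _ _ _ hA hSA
      · simpa using hv
      · simpa using hvB
      · simp
      · simp
      · simp at hn ⊢; omega
    · push Not at hSB
      rcases S.eq_empty_or_nonempty with rfl | ⟨a, ha⟩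
      · exact nice_empty
      · apply nice_del0 (B' := nbS G {a}) ha (Or.inr (hSB a ha))
        · rintro u hu - (h | h)
          · exact absurd h (hSB u hu)
          · simp at h
        · rintro u hu (h | h)
          · exact absurd h (hSB u hu)
          · exact ⟨a, rfl, h⟩
        · have c1 := Finset.card_erase_of_mem ha
          have c2 : 0 < S.card := Finset.card_pos.2 ⟨a, ha⟩
          apply ih
          · simp at hn ⊢; omega
          · exact CutConn.single _ _
          · intro v hv; exact (Finset.mem_erase.1 hv).1
          · simp
          · simp
          · simp
          · simp
  · obtain ⟨v, rfl⟩ := Finset.card_eq_one.1 hR1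
    have hv : v ∈ S := hRS (by simp)
    have hvB := hRB v (by simp)
    by_cases hz : ∃ z ∈ S, z ∈ nbS G A ∧ G.Adj v z
    · obtain ⟨z, hz, hzB, hvz⟩ := hz
      apply nice_addroot hv hz hvz
      have hc : ({v, z} : Finset V).card = 2 := Finset.card_pair hvz.ne
      apply ih _ _ _ _ hA hSA
      · intro x; simp only [Finset.mem_insert, Finset.mem_singleton]; rintro (rfl | rfl) <;> assumption
      · intro x; simp only [Finset.mem_insert, Finset.mem_singleton]; rintro (rfl | rfl) <;> assumption
      · intro x hx y hy
        simp only [Finset.mem_insert, Finset.mem_singleton] at hx hy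
        rcases hx with rfl | rfl <;> rcases hy with rfl | rfl <;> intro hne
        exacts [absurd rfl hne, hvz, hvz.symm, absurd rfl hne]
      · omega
      · have : 0 < S.card := Finset.card_pos.2 ⟨v, hv⟩
        omega
    · push Not at hz
      apply nice_del0 hv (Or.inl (by simp)) _ (hBz v) (ihz v hv hvB)
      rintro u hu hvu (h | h)
      · exact absurd hvu (hz u hu h)
      · exact ⟨h, by simp⟩
  · obtain ⟨v1, v2, hne, rfl⟩ := Finset.card_eq_two.1 hR2
    have hv1 : v1 ∈ S := hRS (by simp)
    have hv2 : v2 ∈ S := hRS (by simp)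
    have hv1B := hRB v1 (by simp)
    have h12 : G.Adj v1 v2 := hRc v1 (by simp) v2 (by simp) hne
    by_cases hz : ∃ z ∈ S, z ∈ nbS G A ∧ G.Adj v1 z ∧ z ≠ v2
    swap
    · push Not at hz
      apply nice_del0 hv1 (Or.inl (by simp)) _ (hBz v1) (ihz v1 hv1 hv1B)
      rintro u hu hvu (h | h)
      · exact ⟨by simp [hz u hu h hvu], by simp⟩
      · exact ⟨h, by simp⟩
    obtain ⟨z, hz, hzB, h1z, hz2⟩ := hz
    have hzR : z ∉ ({v1, v2} : Finset V) := by simp [h1z.ne', hz2]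
    have hN := ihz z hz hzB
    rw [Finset.erase_eq_of_notMem hzR] at hN
    by_cases hw : ∃ w ∈ S, G.Adj z w ∧ w ∈ nbS G A ∧ w ∉ ({v1, v2} : Finset V)
    swap
    · push Not at hw
      exact nice_delz hz hzR hR hw (hBz z) hN
    obtain ⟨w, hwS, hzw, hwB, hwR⟩ := hw
    by_cases hy : ∃ y ∈ S, G.Adj z y ∧ y ∈ nbS G A ∧ y ≠ v1 ∧ y ≠ w
    swap
    · push Not at hy
      refine nice_trick hz hzR hv1 (by simp) h1z.symm hwS hwR hzw hwB ?_ (hBz z) hN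
      intro u hu hzu hor
      have huB : u ∈ nbS G A := hor.elim id (hRB u)
      by_cases h9 : u = v1
      · exact Or.inl h9
      · exact Or.inr (hy u hu hzu huB h9)
    obtain ⟨y, hyS, hzy, hyB, hy1, hyw⟩ := hy
    have hw1 : w ≠ v1 := by rintro rfl; simp at hwR
    -- some `y i` is a cut vertex
    have hcut : ∃ c, c ∈ S ∧ c ∈ nbS G A ∧ G.Adj z c ∧ ¬ CutConn G ((↑(S.erase z) : Set V) \ {c}) := by
      by_contra hno
      push Not at hno
      apply planar_key hG (A := A) (T := (↑(S.erase z) : Set V)) (z := z) (y := ![v1, w, y]) hA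
      · rw [Set.disjoint_left]; intro a ha ha'
        exact hSA a (Finset.mem_of_mem_erase ha') ha
      · exact hSA z hz
      · simp
      · intro i; fin_cases i
        · simp [hv1, h1z.ne]
        · simp [hwS, hzw.ne']
        · simp [hyS, hzy.ne']
      · exact inj3 hw1.symm hy1.symm hyw.symm
      · exact hzB
      · intro i; fin_cases i
        exacts [hv1B, hwB, hyB]
      · intro i; fin_cases i
        exacts [h1z.symm, hzw, hzy]
      · intro i; fin_cases i
        exacts [hno v1 hv1 hv1B h1z.symm, hno w hwS hwB hzw, hno y hyS hyB hzy]
    obtain ⟨c, hcS, hcB, hzc, hcut⟩ := hcut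
    unfold CutConn at hcut
    push Not at hcut
    obtain ⟨D, hD, ⟨d, hd⟩, ⟨e, he, he'⟩, hDe⟩ := hcut
    have hDS : ∀ x ∈ D, x ∈ S ∧ x ≠ z ∧ x ≠ c := by
      intro x hx
      have := hD hx
      simp at this; tauto
    have heS : e ∈ S ∧ e ≠ z ∧ e ≠ c := by
      simp at he; tauto
    -- the two sides
    set P : Finset V := S.filter (fun x => x ∈ D ∨ x = z ∨ x = c) with hP
    set Q : Finset V := S.filter (fun x => x ∉ D) with hQ
    have memP : ∀ x, x ∈ P ↔ x ∈ S ∧ (x ∈ D ∨ x = z ∨ x = c) := fun x => by simp [P]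
    have memQ : ∀ x, x ∈ Q ↔ x ∈ S ∧ x ∉ D := fun x => by simp [Q]
    have hPc : P.card < S.card := by
      apply Finset.card_lt_card
      refine ⟨Finset.filter_subset _ _, fun t => ?_⟩
      have := ((memP e).1 (t heS.1)).2
      tauto
    have hQc : Q.card < S.card := by
      apply Finset.card_lt_card
      refine ⟨Finset.filter_subset _ _, fun t => ?_⟩
      exact ((memQ d).1 (t (hDS d hd).1)).2 hd
    have memI : ∀ x, x ∈ ({z, c} : Finset V) ↔ x ∈ P ∧ x ∈ Q := by
      intro x
      rw [memP, memQ]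
      simp only [Finset.mem_insert, Finset.mem_singleton]
      constructor
      · rintro (rfl | rfl)
        · exact ⟨⟨hz, Or.inr (Or.inl rfl)⟩, hz, fun t => (hDS _ t).2.1 rfl⟩
        · exact ⟨⟨hcS, Or.inr (Or.inr rfl)⟩, hcS, fun t => (hDS _ t).2.2 rfl⟩
      · tauto
    have hcross : ∀ u v, u ∈ P → v ∈ Q → u ∉ Q → v ∉ P → ¬ G.Adj u v := by
      intro u v hu hv hu' hv' huv
      rw [memP] at hu hv'
      rw [memQ] at hv hu'
      have huD : u ∈ D := by tauto
      refine hDe u huD v ⟨?_, hv.2⟩ huv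
      simp; tauto
    have rootNice : ∀ S' : Finset V, S'.card < S.card → S' ⊆ S → z ∈ S' → c ∈ S' →
        Nice G S' (nbS G A) {z, c} := by
      intro S' hc1 hs hz' hc'
      have h2 : ({z, c} : Finset V).card = 2 := Finset.card_pair hzc.ne
      apply ih _ _ _ _ hA (fun v hv => hSA v (hs hv))
      · intro x; simp only [Finset.mem_insert, Finset.mem_singleton]; rintro (rfl | rfl) <;> assumption
      · intro x; simp only [Finset.mem_insert, Finset.mem_singleton]; rintro (rfl | rfl) <;> assumption
      · intro x hx y hy
        simp only [Finset.mem_insert, Finset.mem_singleton] at hx hy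
        rcases hx with rfl | rfl <;> rcases hy with rfl | rfl <;> intro hne
        exacts [absurd rfl hne, hzc, hzc.symm, absurd rfl hne]
      · omega
      · omega
    have oldNice : ∀ S' : Finset V, S'.card < S.card → S' ⊆ S → v1 ∈ S' → v2 ∈ S' →
        Nice G S' (nbS G A) {v1, v2} := by
      intro S' hc1 hs hz' hc'
      apply ih _ _ _ _ hA (fun v hv => hSA v (hs hv)) _ hRB hRc hR
      · omega
      · intro x; simp only [Finset.mem_insert, Finset.mem_singleton]; rintro (rfl | rfl) <;> assumption
    have hPS : P ⊆ S := Finset.filter_subset _ _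
    have hQS : Q ⊆ S := Finset.filter_subset _ _
    have hzI := (memI z).1 (by simp)
    have hcI := (memI c).1 (by simp)
    have hun : ∀ v, v ∈ S ↔ v ∈ P ∨ v ∈ Q := by
      intro v; rw [memP, memQ]; tauto
    by_cases hside : v1 ∈ P ∧ v2 ∈ P
    · refine nice_sep (S1 := P) (S2 := Q) hun memI ?_ hcross (oldNice P hPc hPS hside.1 hside.2)
        (rootNice Q hQc hQS hzI.2 hcI.2)
      intro x; simp only [Finset.mem_insert, Finset.mem_singleton]
      rintro (rfl | rfl)
      exacts [hside.1, hside.2]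
    · have hside' : v1 ∈ Q ∧ v2 ∈ Q := by
        by_contra hno
        have a1 := (hun v1).1 hv1
        have a2 := (hun v2).1 hv2
        have b1 := hcross v1 v2
        have b2 := hcross v2 v1
        have h21 := h12.symm
        tauto
      refine nice_sep (S1 := Q) (S2 := P) (fun v => by rw [hun, or_comm])
        (fun v => by rw [memI, and_comm]) ?_ (fun u v a b c d h => hcross v u b a d c h.symm)
        (oldNice Q hQc hQS hside'.1 hside'.2)
        (rootNice P hPc hPS hzI.1 hcI.1)
      intro x; simp only [Finset.mem_insert, Finset.mem_singleton]
      rintro (rfl | rfl)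
      exacts [hside'.1, hside'.2]

end Nice

/- Every planar graph contains a matching `M` such that `AT(G - M) ≤ 4`. -/
theorem stmt_9 {V : Type*} [Fintype V] [LinearOrder V] (G : SimpleGraph V)
    (hG : G.IsPlanar) :
    ∃ M : G.Subgraph, M.IsMatching ∧
      ∃ η : V →₀ ℕ, (∀ v, η v ≤ 3) ∧
        MvPolynomial.coeff η (graphPoly (G.deleteEdges M.edgeSet)) ≠ 0 := by
  obtain ⟨M, η, h⟩ := nice_main hG _ Finset.univ ∅ ∅ le_rfl
    (fun D hD hn => absurd (hn.mono hD) Set.not_nonempty_empty) (by simp) (by simp) (by simp)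
    (by simp) (by simp)
  refine ⟨⟨M.support, M.Adj, fun hab => h.le hab, fun hab => ⟨_, hab⟩, M.symm⟩, ?_, η, h.b3, ?_⟩
  · rintro v ⟨w, hw⟩
    exact ⟨w, hw, fun u hu => h.mat _ _ _ hu hw⟩
  · have : subG G Finset.univ ∅ M = G.deleteEdges
        (SimpleGraph.Subgraph.edgeSet (G := G)
          ⟨M.support, M.Adj, fun hab => h.le hab, fun hab => ⟨_, hab⟩, M.symm⟩) := by
      ext a b
      simp [subG, SimpleGraph.deleteEdges_adj]
    rw [← this]; exact h.nv
end

section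
/- Let G be a plane (planar embedded) graph whose outer boundary is a cycle, and let e = v₁v₂ be a boundary edge. Then there exists a matching M of G not covering v₁ or v₂, and an exponent function η with η(v₁) = η(v₂) = 0, η(v) ≤ 2 − d_M(v) for every other boundary vertex v, and η(v) ≤ 3 for every interior vertex v, such that the coefficient of x^η in the graph polynomial of G − e − M is nonzero. -/
open MvPolynomial Finset

/- Add an apex vertex adjacent to all vertices of `B`; planarity of the result encodes
that all vertices of `B` lie on a common (outer) face of a plane embedding of `G`. -/
def addApex {V : Type*} (G : SimpleGraph V) (B : Set V) : SimpleGraph (Option V) :=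
  SimpleGraph.fromRel (fun a b =>
    match a, b with
    | some u, some v => G.Adj u v
    | some u, none => u ∈ B
    | none, _ => False)

namespace Stmt10

section poly
variable {V : Type*} 

lemma step_u (Q : MvPolynomial V ℝ) (η : V →₀ ℕ) {v u : V} (h : v ≠ u) (hv : η v = 0) :
    coeff (η + Finsupp.single u 1) (Q * (X v - X u)) = - coeff η Q := by
  classical
  rw [mul_sub, coeff_sub, coeff_mul_X, coeff_mul_X', if_neg]
  · simp
  · simp [hv, h]

lemma step_v (Q : MvPolynomial V ℝ) (η : V →₀ ℕ) {v u : V} (h : v ≠ u) (hu : η u = 0) :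
    coeff (η + Finsupp.single v 1) (Q * (X v - X u)) = coeff η Q := by
  classical
  rw [mul_sub, coeff_sub, coeff_mul_X, coeff_mul_X', if_neg]
  · simp
  · simp [hu, Finsupp.single_apply, h]

/-- sum of unit exponents -/
noncomputable def ind (U : Finset V) : V →₀ ℕ := ∑ u ∈ U, Finsupp.single u 1

lemma ind_apply (U : Finset V) (a : V) [Decidable (a ∈ U)] :
    ind U a = if a ∈ U then 1 else 0 := by
  classical
  simp [ind, Finsupp.finsetSum_apply, Finsupp.single_apply]

lemma ind_insert [DecidableEq V] {U : Finset V} {j : V} (hj : j ∉ U) :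
    ind (insert j U) = ind U + Finsupp.single j 1 := by
  rw [ind, Finset.sum_insert hj, add_comm]; rfl

lemma prod_u (Q : MvPolynomial V ℝ) (η : V →₀ ℕ) {v : V} (U : Finset V) (h : v ∉ U)
    (hv : η v = 0) (hQ : coeff η Q ≠ 0) :
    coeff (η + ind U) (Q * ∏ u ∈ U, (X v - X u)) ≠ 0 := by
  classical
  induction U using Finset.induction_on with
  | empty => simpa [ind] using hQ
  | insert j U hj ih =>
    simp only [Finset.mem_insert, not_or] at h
    rw [ind_insert hj, Finset.prod_insert hj, mul_comm (X v - X j), ← mul_assoc, ← add_assoc,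
      step_u _ _ h.1]
    · simpa using ih h.2
    · simp [hv, ind_apply, h.2]

lemma prod_v (Q : MvPolynomial V ℝ) (η : V →₀ ℕ) {v : V} (U : Finset V) (h : v ∉ U)
    (hU : ∀ u ∈ U, η u = 0) (hQ : coeff η Q ≠ 0) :
    coeff (η + Finsupp.single v U.card) (Q * ∏ u ∈ U, (X v - X u)) ≠ 0 := by
  classical
  induction U using Finset.induction_on with
  | empty => simpa using hQ
  | insert j U hj ih =>
    simp only [Finset.mem_insert, not_or] at h
    rw [Finset.card_insert_of_notMem hj, Finset.prod_insert hj, mul_comm (X v - X j), ← mul_assoc,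
      Finsupp.single_add, ← add_assoc, step_v _ _ h.1]
    · exact ih h.2 (fun u hu => hU u (by simp [hu]))
    · simp [hU j, Finsupp.single_apply, h.1]

lemma find_j (Q : MvPolynomial V ℝ) (θ : V →₀ ℕ) {v : V} (U : Finset V) (h : v ∉ U)
    (hv : θ v = 0) (hQ : ∀ α, coeff α Q ≠ 0 → α v = 0)
    (hc : coeff (θ + Finsupp.single v 1 + ind U) (Q * ∏ u ∈ U, (X v - X u)) ≠ 0) :
    ∃ j ∈ U, coeff (θ + Finsupp.single j 1) Q ≠ 0 := by
  classical
  induction U using Finset.induction_on with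
  | empty =>
    have := hQ _ (by simpa [ind] using hc)
    simp at this
  | insert j U hj ih =>
    simp only [Finset.mem_insert, not_or] at h
    by_cases h0 : coeff (θ + Finsupp.single v 1 + ind U) (Q * ∏ u ∈ U, (X v - X u)) = 0
    · refine ⟨j, by simp, fun h1 => hc ?_⟩
      rw [ind_insert hj, Finset.prod_insert hj, mul_comm (X v - X j), ← mul_assoc, ← add_assoc,
        mul_sub, coeff_sub, coeff_mul_X, h0, sub_zero]
      have : θ + Finsupp.single v 1 + ind U + Finsupp.single j 1
        = (θ + Finsupp.single j 1 + ind U) + Finsupp.single v 1 := by abel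
      rw [this, coeff_mul_X]
      have key : ∀ U' : Finset V, v ∉ U' →
          coeff (θ + Finsupp.single j 1 + ind U') (Q * ∏ u ∈ U', (X v - X u)) = 0 := by
        intro U'
        induction U' using Finset.induction_on with
        | empty => intro _; simpa [ind] using h1
        | insert k U' hk ih' =>
          intro hvk
          simp only [Finset.mem_insert, not_or] at hvk
          rw [ind_insert hk, Finset.prod_insert hk, mul_comm (X v - X k), ← mul_assoc, ← add_assoc,
            step_u _ _ hvk.1, ih' hvk.2, neg_zero]
          simp [hv, ind_apply, hvk.2, Finsupp.single_apply, Ne.symm h.1]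
      exact key U h.2
    · obtain ⟨k, hk, hk'⟩ := ih h.2 h0
      exact ⟨k, by simp [hk], hk'⟩

/-- The exchange step. -/
lemma exchange (Q : MvPolynomial V ℝ) (η : V →₀ ℕ) {v w : V} (U : Finset V) (h : v ∉ U)
    (hvw : v ≠ w) (hwU : w ∉ U)
    (hv : η v = 0) (hQv : ∀ α, coeff α Q ≠ 0 → α v = 0) (hQ : coeff η Q ≠ 0)
    (hz : coeff (η + Finsupp.single v 1 + ind U)
      ((Q * ∏ u ∈ U, (X v - X u)) * (X v - X w)) = 0) :
    ∃ θ : V →₀ ℕ, η = θ + Finsupp.single w 1 ∧ ∃ j ∈ U, coeff (θ + Finsupp.single j 1) Q ≠ 0 := by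
  classical
  have h1 := prod_u Q η U h hv hQ
  rw [mul_sub, coeff_sub, add_right_comm, coeff_mul_X, ← add_right_comm, sub_eq_zero] at hz
  rw [hz, coeff_mul_X'] at h1
  split_ifs at h1 with hw
  · have hw' : η w ≠ 0 := by
      simpa [ind_apply, hwU, Finsupp.single_apply, hvw] using hw
    obtain ⟨θ, hθ⟩ : ∃ θ, η = θ + Finsupp.single w 1 :=
      ⟨η - Finsupp.single w 1, by
        rw [tsub_add_cancel_of_le]
        simpa using Nat.one_le_iff_ne_zero.2 hw'⟩
    subst hθ
    refine ⟨θ, rfl, ?_⟩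
    apply find_j Q _ U h _ hQv
    · have : θ + Finsupp.single w 1 + Finsupp.single v 1 + ind U - Finsupp.single w 1
        = θ + Finsupp.single v 1 + ind U := by
        rw [show θ + Finsupp.single w 1 + Finsupp.single v 1 + ind U
          = (θ + Finsupp.single v 1 + ind U) + Finsupp.single w 1 by abel]
        simp
      rwa [this] at h1
    · simpa [Finsupp.single_apply, hvw.symm] using hv
  · simp at h1

variable [Fintype V] [LinearOrder V]

lemma graphPoly_homog (K : SimpleGraph V) : ∃ d, (graphPoly K).IsHomogeneous d := by
  classical
  refine ⟨_, IsHomogeneous.prod _ _ (fun _ => 1) ?_⟩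
  intro p _
  exact (isHomogeneous_X _ _).sub (isHomogeneous_X _ _)

lemma graphPoly_supp (K : SimpleGraph V) {α : V →₀ ℕ} (h : coeff α (graphPoly K) ≠ 0) {u : V}
    (hu : ∀ w, ¬ K.Adj u w) : α u = 0 := by
  classical
  by_contra h0
  have h1 : u ∈ (graphPoly K).vars := by
    rw [mem_vars_iff_mem_support]
    exact ⟨α, by simpa [mem_support_iff] using h, by simpa using h0⟩
  have h2 := vars_prod _ h1
  simp only [Finset.mem_biUnion, Finset.mem_filter] at h2
  obtain ⟨p, ⟨_, hp, _⟩, hpu⟩ := h2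
  have h3 := vars_sub_subset _ hpu
  simp only [vars_X, Finset.mem_union, Finset.mem_singleton] at h3
  rcases h3 with rfl | rfl
  · exact hu _ hp.symm
  · exact hu _ hp

lemma graphPoly_union (K L N : SimpleGraph V) (h : ∀ a b, N.Adj a b ↔ K.Adj a b ∨ L.Adj a b)
    (hd : ∀ a b, K.Adj a b → ¬ L.Adj a b) : graphPoly N = graphPoly K * graphPoly L := by
  classical
  unfold graphPoly
  rw [← Finset.prod_union]
  · congr 1
    ext p; simp [h]; tauto
  · rw [Finset.disjoint_left]
    intro p; simp; intro h1 _ h2; exact absurd h2 (hd _ _ h1)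

open scoped Classical in
lemma graphPoly_star (K N : SimpleGraph V) (v : V)
    (h : ∀ a b, N.Adj a b ↔ K.Adj a b ∨ (a = v ∧ N.Adj v b) ∨ (b = v ∧ N.Adj v a))
    (hK : ∀ a, ¬ K.Adj v a) :
    ∃ ε : ℝ, ε ≠ 0 ∧
      graphPoly N = C ε * (graphPoly K * ∏ u ∈ Finset.univ.filter (fun u => N.Adj v u), (X v - X u)) := by
  have h1 : graphPoly N = graphPoly K *
      ∏ u ∈ Finset.univ.filter (fun u => N.Adj v u), (X (max v u) - X (min v u)) := by
    unfold graphPoly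
    rw [← Finset.prod_filter_mul_prod_filter_not _ (fun p : V × V => K.Adj p.1 p.2)]
    congr 1
    · congr 1
      ext p; simp
      constructor
      · tauto
      · rintro ⟨hp, hlt⟩; exact ⟨⟨(h _ _).2 (Or.inl hp), hlt⟩, hp⟩
    · symm
      refine Finset.prod_bij (fun u _ => (min v u, max v u)) ?_ ?_ ?_ ?_
      · intro u hu
        simp only [Finset.mem_filter, Finset.mem_univ, true_and] at hu ⊢
        have hne := hu.ne
        rcases lt_or_gt_of_ne hne with hl | hl
        · simp [hl.le, hu, hl, hK]
        · simp [hl.le, hu.symm, hl]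
          exact fun hh => hK _ hh.symm
      · intro a ha b hb hab
        simp only [Finset.mem_filter, Finset.mem_univ, true_and, Prod.mk.injEq] at ha hb hab
        obtain ⟨h1, h2⟩ := hab
        have := ha.ne
        have := hb.ne
        rcases le_total v a with hl | hl <;> rcases le_total v b with hl' | hl' <;>
          simp only [hl, hl', min_eq_left, min_eq_right, max_eq_left, max_eq_right] at h1 h2 <;>
          first | exact h1 | exact h2 | exact absurd h1 ‹v ≠ b› | exact absurd h1.symm ‹v ≠ a›
      · rintro ⟨a, b⟩ hp
        simp only [Finset.mem_filter, Finset.mem_univ, true_and] at hp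
        rcases (h a b).1 hp.1.1 with hh | ⟨rfl, hh⟩ | ⟨rfl, hh⟩
        · exact absurd hh hp.2
        · exact ⟨b, by simpa using hh, by simp [hp.1.2.le]⟩
        · exact ⟨a, by simpa using hh, by simp [hp.1.2.le]⟩
      · intro u hu; rfl
  have h2 : ∀ U : Finset V, ∃ ε : ℝ, ε ≠ 0 ∧ 
      (∏ u ∈ U, (X (max v u) - X (min v u)) : MvPolynomial V ℝ) = C ε * ∏ u ∈ U, (X v - X u) := by
    intro U
    induction U using Finset.induction_on with
    | empty => exact ⟨1, by simp⟩
    | insert j U hj ih =>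
      obtain ⟨ε, h0, h3⟩ := ih
      rw [Finset.prod_insert hj, Finset.prod_insert hj, h3]
      rcases le_total v j with hl | hl
      · exact ⟨-ε, by simpa, by simp [hl]; ring⟩
      · exact ⟨ε, by simpa, by simp [hl]; ring⟩
  obtain ⟨ε, h0, h3⟩ := h2 (Finset.univ.filter (fun u => N.Adj v u))
  exact ⟨ε, h0, by rw [h1, h3]; ring⟩

lemma coeff_mul_unique (F₁ F₂ : MvPolynomial V ℝ) (η₁ η₂ : V →₀ ℕ) {d : ℕ}
    (hd : F₂.IsHomogeneous d) (h1 : coeff η₁ F₁ ≠ 0) (h2 : coeff η₂ F₂ ≠ 0)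
    (h : ∀ u, η₂ u = 0 ∨ ∀ α, coeff α F₁ ≠ 0 → α u = 0) :
    coeff (η₁ + η₂) (F₁ * F₂) ≠ 0 := by
  classical
  rw [coeff_mul, Finset.sum_eq_single (η₁, η₂)]
  · exact mul_ne_zero h1 h2
  · rintro ⟨α, β⟩ hab hne
    rw [Finset.HasAntidiagonal.mem_antidiagonal] at hab
    by_contra h0
    simp only [mul_eq_zero, not_or] at h0
    apply hne
    have hle : η₂ ≤ β := by
      intro u
      rcases h u with hu | hu
      · simp [hu]
      · have e := DFunLike.congr_fun hab u
        simp [hu α h0.1, hu η₁ h1] at e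
        exact e.ge
    have hdeg : β.degree = η₂.degree := by
      have a := hd h0.2
      have b := hd h2
      have e : ∀ γ : V →₀ ℕ, γ.degree = Finsupp.weight 1 γ := by
        intro γ; rw [Finsupp.degree_eq_weight_one]; rfl
      rw [e, e]
      exact a.trans b.symm
    obtain ⟨γ, rfl⟩ := le_iff_exists_add.1 hle
    have : γ = 0 := by
      rw [map_add] at hdeg
      rw [← Finsupp.degree_eq_zero_iff]; omega
    subst this
    simp at hab
    simp [hab]
  · intro hh; simp at hh

end poly

section minors
variable {W : Type*} (H : SimpleGraph W)

/-- adjacency of vertex sets -/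
def AdjS (s t : Set W) : Prop := ∃ p ∈ s, ∃ q ∈ t, H.Adj p q

lemma AdjS.symm {H : SimpleGraph W} {s t : Set W} (h : AdjS H s t) : AdjS H t s := by
  obtain ⟨p, hp, q, hq, h⟩ := h
  exact ⟨q, hq, p, hp, h.symm⟩

lemma conn_singleton (x : W) : (H.induce {x}).Connected := by
  rw [SimpleGraph.induce_singleton_eq_top]
  exact SimpleGraph.connected_top

lemma k33 (a b c x y z : Set W)
    (ha : (H.induce a).Connected) (hb : (H.induce b).Connected) (hc : (H.induce c).Connected)
    (hx : (H.induce x).Connected) (hy : (H.induce y).Connected) (hz : (H.induce z).Connected)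
    (hab : Disjoint a b) (hac : Disjoint a c) (hbc : Disjoint b c)
    (hxy : Disjoint x y) (hxz : Disjoint x z) (hyz : Disjoint y z)
    (dax : Disjoint a x) (day : Disjoint a y) (daz : Disjoint a z)
    (dbx : Disjoint b x) (dby : Disjoint b y) (dbz : Disjoint b z)
    (dcx : Disjoint c x) (dcy : Disjoint c y) (dcz : Disjoint c z)
    (hax : AdjS H a x) (hay : AdjS H a y) (haz : AdjS H a z)
    (hbx : AdjS H b x) (hby : AdjS H b y) (hbz : AdjS H b z)
    (hcx : AdjS H c x) (hcy : AdjS H c y) (hcz : AdjS H c z) :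
    SimpleGraph.IsMinor (completeBipartiteGraph (Fin 3) (Fin 3)) H := by
  refine ⟨Sum.elim ![a, b, c] ![x, y, z], ?_, ?_, ?_⟩
  · rintro (i | i) <;> fin_cases i <;> assumption
  · rintro (i | i) (j | j) hij <;> fin_cases i <;> fin_cases j <;>
      first | exact absurd rfl hij | assumption | (apply Disjoint.symm; assumption)
  · rintro (i | i) (j | j) hij
    · simp at hij
    · fin_cases i <;> fin_cases j <;> assumption
    · fin_cases i <;> fin_cases j <;> (apply AdjS.symm; assumption)
    · simp at hij

lemma k5 (a b x y z : Set W)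
    (ha : (H.induce a).Connected) (hb : (H.induce b).Connected)
    (hx : (H.induce x).Connected) (hy : (H.induce y).Connected) (hz : (H.induce z).Connected)
    (hab : Disjoint a b)
    (hxy : Disjoint x y) (hxz : Disjoint x z) (hyz : Disjoint y z)
    (dax : Disjoint a x) (day : Disjoint a y) (daz : Disjoint a z)
    (dbx : Disjoint b x) (dby : Disjoint b y) (dbz : Disjoint b z)
    (kab : AdjS H a b)
    (hax : AdjS H a x) (hay : AdjS H a y) (haz : AdjS H a z)
    (hbx : AdjS H b x) (hby : AdjS H b y) (hbz : AdjS H b z)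
    (kxy : AdjS H x y) (kxz : AdjS H x z) (kyz : AdjS H y z) :
    SimpleGraph.IsMinor (SimpleGraph.completeGraph (Fin 5)) H := by
  refine ⟨![a, b, x, y, z], ?_, ?_, ?_⟩
  · intro i; fin_cases i <;> assumption
  · intro i j hij; fin_cases i <;> fin_cases j <;>
      first | exact absurd rfl hij | assumption | (apply Disjoint.symm; assumption)
  · intro i j hij
    have hij := hij.ne
    fin_cases i <;> fin_cases j <;>
      first | exact absurd rfl hij | assumption | (apply AdjS.symm; assumption)

lemma bridge (U : Set W) {x z : W} (hx : x ∈ U) (hz : z ∈ U) (hne : x ≠ z)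
    (hU : (H.induce U).Preconnected) :
    ∃ E : Set W, E ⊆ U \ {x, z} ∧ (H.induce (insert x E)).Connected ∧
      AdjS H (insert x E) {z} ∧ (E = ∅ ∨ ((H.induce E).Connected ∧ AdjS H E {x} ∧ AdjS H E {z})) := by
  classical
  have key : ∀ (s t : U) (q : (H.induce U).Walk s t),
      ∃ p : H.Walk s.1 t.1, ∀ a ∈ p.support, a ∈ U := by
    intro s t q
    induction q with
    | nil => exact ⟨SimpleGraph.Walk.nil, by simp⟩
    | @cons a b c hab q ih =>
      obtain ⟨p, hp⟩ := ih
      have hab' : H.Adj a.1 b.1 := hab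
      refine ⟨SimpleGraph.Walk.cons hab' p, ?_⟩
      intro e he
      rw [SimpleGraph.Walk.support_cons, List.mem_cons] at he
      rcases he with rfl | he
      · exact a.2
      · exact hp e he
  obtain ⟨q⟩ := hU ⟨x, hx⟩ ⟨z, hz⟩
  obtain ⟨p, hp⟩ := key _ _ q
  have hq : ∀ a ∈ p.bypass.support, a ∈ U := fun a ha => hp a (p.support_bypass_subset_support ha)
  have hpath : p.bypass.IsPath := p.bypass_isPath
  generalize p.bypass = r at hq hpath
  cases r with
  | nil => exact absurd rfl hne
  | @cons _ x' _ h1 r1 =>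
    rw [SimpleGraph.Walk.cons_isPath_iff] at hpath
    obtain ⟨hr1, hxr1⟩ := hpath
    by_cases hxz : x' = z
    · subst hxz
      refine ⟨∅, by simp, ?_, ⟨x, by simp, x', by simp, h1⟩, Or.inl rfl⟩
      rw [insert_empty_eq]
      exact conn_singleton H x
    · have hq1 : ∀ a ∈ r1.reverse.support, a ∈ U ∧ a ≠ x := by
        intro a ha
        rw [SimpleGraph.Walk.support_reverse, List.mem_reverse] at ha
        refine ⟨hq a (by simp [ha]), ?_⟩
        rintro rfl; exact hxr1 ha
      have hr2 := hr1.reverse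
      generalize r1.reverse = s at hq1 hr2
      cases s with
      | nil => exact absurd rfl hxz
      | @cons _ z' _ h2 s1 =>
        rw [SimpleGraph.Walk.cons_isPath_iff] at hr2
        have hc := s1.connected_induce_support
        have hx' : x' ∈ {v | v ∈ s1.support} := s1.end_mem_support
        have hz' : z' ∈ {v | v ∈ s1.support} := s1.start_mem_support
        refine ⟨{v | v ∈ s1.support}, ?_, ?_, ?_, Or.inr ⟨hc, ?_, ?_⟩⟩
        · intro a ha
          have := hq1 a (by simp at ha; simp [ha])
          refine ⟨this.1, ?_⟩
          simp only [Set.mem_insert_iff, Set.mem_singleton_iff, not_or]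
          refine ⟨this.2, ?_⟩
          rintro rfl; exact hr2.2 ha
        · exact SimpleGraph.connected_induce_union (conn_singleton H x).preconnected
            hc.preconnected (Set.mem_singleton x) hx' h1
        · exact ⟨z', Or.inr hz', z, rfl, h2.symm⟩
        · exact ⟨x', hx', x, rfl, h1.symm⟩
        · exact ⟨z', hz', z, rfl, h2.symm⟩

lemma AdjS.mono {H : SimpleGraph W} {s t s' t' : Set W} (h : AdjS H s t) (hs : s ⊆ s') (ht : t ⊆ t') :
    AdjS H s' t' := by
  obtain ⟨p, hp, q, hq, h⟩ := h
  exact ⟨p, hs hp, q, ht hq, h⟩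

lemma triple (hH : H.IsPlanar) (A T : Set W) (v x y z : W)
    (hA : (H.induce A).Connected) (hAT : Disjoint A T) (hvA : v ∉ A) (hvT : v ∉ T)
    (hx : x ∈ T) (hy : y ∈ T) (hz : z ∈ T) (hxy : x ≠ y) (hxz : x ≠ z) (hyz : y ≠ z)
    (kv : AdjS H A {v}) (kx : AdjS H A {x}) (ky : AdjS H A {y}) (kz : AdjS H A {z})
    (jx : H.Adj v x) (jy : H.Adj v y) (jz : H.Adj v z)
    (px : (H.induce (T \ {x})).Preconnected) (py : (H.induce (T \ {y})).Preconnected)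
    (pz : (H.induce (T \ {z})).Preconnected) : False := by
  obtain ⟨E1, s1, c1, a1, o1⟩ := bridge H (T \ {z}) (x := x) (z := y) (by simp [*]) (by simp [*]) hxy pz
  obtain ⟨E2, s2, c2, a2, o2⟩ := bridge H (T \ {x}) (x := y) (z := z) (by simp [hy, hxy.symm])
    (by simp [hz, hxz.symm]) hyz px
  obtain ⟨E3, s3, c3, a3, o3⟩ := bridge H (T \ {y}) (x := z) (z := x) (by simp [hz, hyz.symm])
    (by simp [hx, hxy]) hxz.symm py
  have K : ∀ D : Set W, D ⊆ T → x ∉ D → y ∉ D → z ∉ D → (H.induce D).Connected →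
      AdjS H D {x} → AdjS H D {y} → AdjS H D {z} → False := by
    intro D hD xD yD zD cD dx dy dz
    refine hH.2 (k33 H A {v} D {x} {y} {z} hA (conn_singleton H _) cD (conn_singleton H _)
      (conn_singleton H _) (conn_singleton H _) ?_ ?_ ?_ ?_ ?_ ?_ ?_ ?_ ?_ ?_ ?_ ?_ ?_ ?_ ?_
      kx ky kz ⟨v, rfl, x, rfl, jx⟩ ⟨v, rfl, y, rfl, jy⟩ ⟨v, rfl, z, rfl, jz⟩ dx dy dz)
    · simpa using hvA
    · exact hAT.mono_right hD
    · simpa using fun h => hvT (hD h)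
    · simpa using hxy
    · simpa using hxz
    · simpa using hyz
    · exact hAT.mono_right (by simpa using hx)
    · exact hAT.mono_right (by simpa using hy)
    · exact hAT.mono_right (by simpa using hz)
    · simpa using jx.ne
    · simpa using jy.ne
    · simpa using jz.ne
    · simpa using xD
    · simpa using yD
    · simpa using zD
  have t1 : ∀ a ∈ E1, a ∈ T ∧ a ≠ x ∧ a ≠ y ∧ a ≠ z := by
    intro a ha; have := s1 ha; simp at this; tauto
  have t2 : ∀ a ∈ E2, a ∈ T ∧ a ≠ x ∧ a ≠ y ∧ a ≠ z := by
    intro a ha; have := s2 ha; simp at this; tauto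
  have t3 : ∀ a ∈ E3, a ∈ T ∧ a ≠ x ∧ a ≠ y ∧ a ≠ z := by
    intro a ha; have := s3 ha; simp at this; tauto
  have KK : ∀ E E' : Set W, (∀ a ∈ E, a ∈ T ∧ a ≠ x ∧ a ≠ y ∧ a ≠ z) →
      (∀ a ∈ E', a ∈ T ∧ a ≠ x ∧ a ≠ y ∧ a ≠ z) → ((H.induce E).Connected) →
      ((H.induce E').Connected) → AdjS H (E ∪ E') {x} → AdjS H (E ∪ E') {y} →
      AdjS H (E ∪ E') {z} → Disjoint E E' := by
    intro E E' hE hE' cE cE' h1 h2 h3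
    by_contra hd
    rw [Set.not_disjoint_iff_nonempty_inter] at hd
    refine K (E ∪ E') ?_ ?_ ?_ ?_
      (SimpleGraph.induce_union_connected cE.preconnected cE'.preconnected hd) h1 h2 h3
    · rintro a (ha | ha)
      · exact (hE a ha).1
      · exact (hE' a ha).1
    · rintro (ha | ha)
      · exact (hE _ ha).2.1 rfl
      · exact (hE' _ ha).2.1 rfl
    · rintro (ha | ha)
      · exact (hE _ ha).2.2.1 rfl
      · exact (hE' _ ha).2.2.1 rfl
    · rintro (ha | ha)
      · exact (hE _ ha).2.2.2 rfl
      · exact (hE' _ ha).2.2.2 rfl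
  have l : ∀ {E E' : Set W} {u : W}, AdjS H E {u} → AdjS H (E ∪ E') {u} :=
    fun h => h.mono Set.subset_union_left subset_rfl
  have r : ∀ {E E' : Set W} {u : W}, AdjS H E' {u} → AdjS H (E ∪ E') {u} :=
    fun h => h.mono Set.subset_union_right subset_rfl
  have d12 : Disjoint E1 E2 := by
    rcases o1 with rfl | ⟨h1, h2, h3⟩
    · simp
    rcases o2 with rfl | ⟨g1, g2, g3⟩
    · simp
    exact KK _ _ t1 t2 h1 g1 (l h2) (l h3) (r g3)
  have d23 : Disjoint E2 E3 := by
    rcases o2 with rfl | ⟨h1, h2, h3⟩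
    · simp
    rcases o3 with rfl | ⟨g1, g2, g3⟩
    · simp
    exact KK _ _ t2 t3 h1 g1 (r g3) (l h2) (l h3)
  have d13 : Disjoint E1 E3 := by
    rcases o1 with rfl | ⟨h1, h2, h3⟩
    · simp
    rcases o3 with rfl | ⟨g1, g2, g3⟩
    · simp
    exact KK _ _ t1 t3 h1 g1 (l h2) (l h3) (r g2)
  have e1 : insert x E1 ⊆ T := by
    rintro a (rfl | ha)
    · exact hx
    · exact (t1 a ha).1
  have e2 : insert y E2 ⊆ T := by
    rintro a (rfl | ha)
    · exact hy
    · exact (t2 a ha).1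
  have e3 : insert z E3 ⊆ T := by
    rintro a (rfl | ha)
    · exact hz
    · exact (t3 a ha).1
  have si : ∀ (u : W) (E : Set W), ({u} : Set W) ⊆ insert u E := by simp
  refine hH.1 (k5 H A {v} (insert x E1) (insert y E2) (insert z E3) hA (conn_singleton H _) c1 c2 c3
    ?_ ?_ ?_ ?_ (hAT.mono_right e1) (hAT.mono_right e2) (hAT.mono_right e3) ?_ ?_ ?_ kv
    (kx.mono subset_rfl (si _ _)) (ky.mono subset_rfl (si _ _)) (kz.mono subset_rfl (si _ _))
    ⟨v, rfl, x, by simp, jx⟩ ⟨v, rfl, y, by simp, jy⟩ ⟨v, rfl, z, by simp, jz⟩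
    (a1.mono subset_rfl (si _ _)) (a3.mono subset_rfl (si _ _)).symm (a2.mono subset_rfl (si _ _)))
  · simpa using hvA
  · simp only [Set.disjoint_insert_left, Set.disjoint_insert_right, Set.mem_insert_iff, not_or]
    exact ⟨⟨hxy.symm, fun h => (t1 _ h).2.2.1 rfl⟩, fun h => (t2 _ h).2.1 rfl, d12⟩
  · simp only [Set.disjoint_insert_left, Set.disjoint_insert_right, Set.mem_insert_iff, not_or]
    exact ⟨⟨hxz.symm, fun h => (t1 _ h).2.2.2 rfl⟩, fun h => (t3 _ h).2.1 rfl, d13⟩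
  · simp only [Set.disjoint_insert_left, Set.disjoint_insert_right, Set.mem_insert_iff, not_or]
    exact ⟨⟨hyz.symm, fun h => (t2 _ h).2.2.2 rfl⟩, fun h => (t3 _ h).2.2.1 rfl, d23⟩
  · simpa using fun h => hvT (e1 h)
  · simpa using fun h => hvT (e2 h)
  · simpa using fun h => hvT (e3 h)
end minors

section main
variable {V : Type*}

/-- covered by the matching -/
def Cov (M : SimpleGraph V) (u : V) : Prop := ∃ w, M.Adj u w

/-- The part of `G` inside `S`, without edges inside `R` and without the edges of `M`. -/
def KG (G M : SimpleGraph V) (S R : Set V) : SimpleGraph V where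
  Adj u w := G.Adj u w ∧ u ∈ S ∧ w ∈ S ∧ ¬(u ∈ R ∧ w ∈ R) ∧ ¬ M.Adj u w
  symm := ⟨fun u w ⟨h1, h2, h3, h4, h5⟩ => ⟨h1.symm, h3, h2, fun h => h4 h.symm, fun h => h5 h.symm⟩⟩
  loopless := ⟨fun u h => G.loopless.irrefl u h.1⟩

variable [Fintype V] [LinearOrder V]

structure Good (G : SimpleGraph V) (S B R : Set V) (M : SimpleGraph V) (η : V →₀ ℕ) : Prop where
  le : ∀ a b, M.Adj a b → G.Adj a b
  mat : ∀ a b c, M.Adj a b → M.Adj a c → b = c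
  inS : ∀ a b, M.Adj a b → a ∈ S ∧ a ∉ R
  out : ∀ u, u ∉ S → η u = 0
  root : ∀ u ∈ R, η u = 0
  bd1 : ∀ u ∈ B, Cov M u → η u ≤ 1
  bd2 : ∀ u ∈ B, η u ≤ 2
  int : ∀ u, η u ≤ 3
  co : coeff η (graphPoly (KG G M S R)) ≠ 0

lemma KG_iso (G M : SimpleGraph V) (S R : Set V) {α : V →₀ ℕ}
    (h : coeff α (graphPoly (KG G M S R)) ≠ 0) {u : V} (hu : u ∉ S) : α u = 0 :=
  graphPoly_supp _ h (fun _ hw => hu hw.2.1)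

lemma KG_star1 (G M : SimpleGraph V) (S R : Set V) (r : V) (a b : V) :
    (KG G M S R).Adj a b ↔ (KG G M (S \ {r}) (R \ {r})).Adj a b ∨
      (a = r ∧ (KG G M S R).Adj r b) ∨ (b = r ∧ (KG G M S R).Adj r a) := by
  by_cases ha : a = r
  · subst ha
    have : ¬ (KG G M (S \ {a}) (R \ {a})).Adj a b := fun h => h.2.1.2 rfl
    have h2 : b = a → ¬ (KG G M S R).Adj a a := fun _ => (KG G M S R).loopless.irrefl a
    tauto
  · by_cases hb : b = r
    · subst hb
      have : ¬ (KG G M (S \ {b}) (R \ {b})).Adj a b := fun h => h.2.2.1.2 rfl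
      rw [SimpleGraph.adj_comm]
      tauto
    · simp only [ha, hb, false_and, or_false]
      simp only [KG, Set.mem_sdiff, Set.mem_singleton_iff, ha, hb, not_false_eq_true, and_true]

lemma KG_star2 (G M M' : SimpleGraph V) (S R : Set V) (v : V)
    (hM' : ∀ a b, a ≠ v → b ≠ v → (M'.Adj a b ↔ M.Adj a b)) (a b : V) :
    (KG G M' S R).Adj a b ↔ (KG G M (S \ {v}) R).Adj a b ∨
      (a = v ∧ (KG G M' S R).Adj v b) ∨ (b = v ∧ (KG G M' S R).Adj v a) := by
  by_cases ha : a = v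
  · subst ha
    have : ¬ (KG G M (S \ {a}) R).Adj a b := fun h => h.2.1.2 rfl
    have h2 : b = a → ¬ (KG G M' S R).Adj a a := fun _ => (KG G M' S R).loopless.irrefl a
    tauto
  · by_cases hb : b = v
    · subst hb
      have : ¬ (KG G M (S \ {b}) R).Adj a b := fun h => h.2.2.1.2 rfl
      rw [SimpleGraph.adj_comm]
      tauto
    · simp only [ha, hb, false_and, or_false]
      simp only [KG, Set.mem_sdiff, Set.mem_singleton_iff, ha, hb, not_false_eq_true, and_true,
        hM' a b ha hb]

lemma del_root (G : SimpleGraph V) (S B R : Set V) (r : V) (hr : r ∈ R) (hRB : R ⊆ B) (hBS : B ⊆ S)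
    (hN : ∀ b ∈ B, G.Adj r b → b ∈ R) (M : SimpleGraph V) (η : V →₀ ℕ)
    (h : Good G (S \ {r}) ((B ∪ {u | u ∈ S ∧ G.Adj r u}) \ {r}) (R \ {r}) M η) :
    ∃ η', Good G S B R M η' := by
  classical
  have hMr : ∀ a b, M.Adj a b → a ≠ r := fun a b hab => (h.inS a b hab).1.2
  obtain ⟨ε, hε, hP⟩ := graphPoly_star (KG G M (S \ {r}) (R \ {r})) (KG G M S R) r
    (KG_star1 G M S R r) (by intro a ha; exact ha.2.1.2 rfl)
  set U := Finset.univ.filter (fun u => (KG G M S R).Adj r u) with hU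
  have hUm : ∀ u, u ∈ U → G.Adj r u ∧ u ∈ S ∧ u ∉ R ∧ u ∉ B ∧ u ≠ r := by
    intro u hu
    rw [hU, Finset.mem_filter] at hu
    replace hu := hu.2
    have : u ∉ R := fun hh => hu.2.2.2.1 ⟨hr, hh⟩
    exact ⟨hu.1, hu.2.2.1, this, fun hb => this (hN u hb hu.1), hu.1.ne'⟩
  have hrU : r ∉ U := fun hh => (hUm r hh).2.2.2.2 rfl
  have hηr : η r = 0 := h.out r (by simp)
  refine ⟨η + ind U, h.le, h.mat, ?_, ?_, ?_, ?_, ?_, ?_, ?_⟩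
  · intro a b hab
    have := h.inS a b hab
    have := hMr a b hab
    simp only [Set.mem_sdiff, Set.mem_singleton_iff] at *
    tauto
  · intro u hu
    have h1 : u ∉ U := fun hh => hu (hUm u hh).2.1
    simp [ind_apply, h1, h.out u (fun hh => hu hh.1)]
  · intro u hu
    have h1 : u ∉ U := fun hh => (hUm u hh).2.2.1 hu
    by_cases hur : u = r
    · subst hur; simp [ind_apply, h1, hηr]
    · simp [ind_apply, h1, h.root u ⟨hu, hur⟩]
  · intro u hu hc
    have h1 : u ∉ U := fun hh => (hUm u hh).2.2.2.1 hu
    by_cases hur : u = r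
    · subst hur; simp [ind_apply, h1, hηr]
    · simpa [ind_apply, h1] using h.bd1 u ⟨Or.inl hu, hur⟩ hc
  · intro u hu
    have h1 : u ∉ U := fun hh => (hUm u hh).2.2.2.1 hu
    by_cases hur : u = r
    · subst hur; simp [ind_apply, h1, hηr]
    · simpa [ind_apply, h1] using h.bd2 u ⟨Or.inl hu, hur⟩
  · intro u
    by_cases h1 : u ∈ U
    · have h2 := hUm u h1
      have := h.bd2 u ⟨Or.inr ⟨h2.2.1, h2.1⟩, h2.2.2.2.2⟩
      simp [ind_apply, h1]; omega
    · simpa [ind_apply, h1] using h.int u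
  · rw [hP, coeff_C_mul]
    exact mul_ne_zero hε (prod_u _ _ U hrU hηr h.co)

/-- common part of vertex deletion: star decomposition at `v` -/
lemma star_v (G : SimpleGraph V) (S R : Set V) (v : V) (hv : v ∉ R) (hvS : v ∈ S)
    (M M' : SimpleGraph V) (hM : ∀ a b, M.Adj a b → a ≠ v)
    (hM' : ∀ a b, a ≠ v → b ≠ v → (M'.Adj a b ↔ M.Adj a b))
    (U : Finset V) (hU : ∀ u, u ∈ U ↔ G.Adj v u ∧ u ∈ S ∧ ¬ M'.Adj v u) (η : V →₀ ℕ)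
    (hc : coeff η (graphPoly (KG G M (S \ {v}) R) * ∏ u ∈ U, (X v - X u)) ≠ 0) :
    coeff η (graphPoly (KG G M' S R)) ≠ 0 := by
  classical
  obtain ⟨ε, hε, hP⟩ := graphPoly_star (KG G M (S \ {v}) R) (KG G M' S R) v
    (KG_star2 G M M' S R v hM') (by intro a ha; exact ha.2.1.2 rfl)
  have : Finset.univ.filter (fun u => (KG G M' S R).Adj v u) = U := by
    ext u
    rw [Finset.mem_filter, hU]
    simp only [Finset.mem_univ, true_and]
    change (G.Adj v u ∧ v ∈ S ∧ u ∈ S ∧ ¬(v ∈ R ∧ u ∈ R) ∧ ¬ M'.Adj v u) ↔ _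
    tauto
  rw [this] at hP
  rw [hP, coeff_C_mul]
  exact mul_ne_zero hε hc

lemma del_v (G : SimpleGraph V) (S B R : Set V) (v : V) (hvB : v ∈ B) (hv : v ∉ R)
    (hRB : R ⊆ B) (hBS : B ⊆ S)
    (hN : ∀ b ∈ B, G.Adj v b → b ∈ R)
    (h3 : ∀ x y z, x ∈ B → y ∈ B → z ∈ B → G.Adj v x → G.Adj v y → G.Adj v z →
      x ≠ y → x ≠ z → y ≠ z → False)
    (M : SimpleGraph V) (η : V →₀ ℕ)
    (h : Good G (S \ {v}) ((B ∪ {u | u ∈ S ∧ G.Adj v u}) \ {v}) R M η) :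
    ∃ η', Good G S B R M η' := by
  classical
  have hMv : ∀ a b, M.Adj a b → a ≠ v := fun a b hab => (h.inS a b hab).1.2
  let U := Finset.univ.filter (fun u => G.Adj v u ∧ u ∈ S ∧ u ∉ B)
  let N := Finset.univ.filter (fun u => G.Adj v u ∧ u ∈ R)
  have hU : ∀ u, u ∈ U ↔ G.Adj v u ∧ u ∈ S ∧ u ∉ B := by simp [U]
  have hNm : ∀ u, u ∈ N ↔ G.Adj v u ∧ u ∈ R := by simp [N]
  have hcard : N.card ≤ 2 := by
    by_contra hh
    obtain ⟨x, hx, y, hy, z, hz, h1, h2, h4⟩ := Finset.two_lt_card.1 (not_le.1 hh)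
    rw [hNm] at hx hy hz
    exact h3 x y z (hRB hx.2) (hRB hy.2) (hRB hz.2) hx.1 hy.1 hz.1 h1 h2 h4
  have hvU : v ∉ U := fun hh => ((hU v).1 hh).1.ne rfl
  have hvN : v ∉ N := fun hh => ((hNm v).1 hh).1.ne rfl
  have hd : Disjoint U N := by
    rw [Finset.disjoint_left]; intro u h1 h2
    exact ((hU u).1 h1).2.2 (hRB ((hNm u).1 h2).2)
  have hηv : η v = 0 := h.out v (by simp)
  have ev : (η + ind U + Finsupp.single v N.card) v = N.card := by
    simp [ind_apply, hvU, hηv]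
  have eo : ∀ u, u ≠ v → (η + ind U + Finsupp.single v N.card) u = η u + if u ∈ U then 1 else 0 := by
    intro u hu
    simp [ind_apply, Finsupp.single_apply, Ne.symm hu]
  have eB : ∀ u, u ≠ v → u ∈ B → (η + ind U + Finsupp.single v N.card) u = η u := by
    intro u hu hb
    rw [eo u hu, if_neg (fun hh => ((hU u).1 hh).2.2 hb), add_zero]
  refine ⟨η + ind U + Finsupp.single v N.card, h.le, h.mat, ?_, ?_, ?_, ?_, ?_, ?_, ?_⟩
  · intro a b hab
    exact ⟨(h.inS a b hab).1.1, (h.inS a b hab).2⟩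
  · intro u hu
    rw [eo u (by rintro rfl; exact hu (hBS hvB)), if_neg (fun hh => hu ((hU u).1 hh).2.1),
      h.out u (fun hh => hu hh.1)]
  · intro u hu
    rw [eB u (by rintro rfl; exact hv hu) (hRB hu), h.root u hu]
  · intro u hu hc
    have huv : u ≠ v := by
      rintro rfl; obtain ⟨w, hw⟩ := hc; exact hMv _ _ hw rfl
    rw [eB u huv hu]
    exact h.bd1 u ⟨Or.inl hu, huv⟩ hc
  · intro u hu
    by_cases huv : u = v
    · subst huv; rw [ev]; exact hcard
    · rw [eB u huv hu]; exact h.bd2 u ⟨Or.inl hu, huv⟩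
  · intro u
    by_cases huv : u = v
    · subst huv; rw [ev]; omega
    · rw [eo u huv]
      split_ifs with h1
      · have h2 := (hU u).1 h1
        have := h.bd2 u ⟨Or.inr ⟨h2.2.1, h2.1⟩, huv⟩
        omega
      · exact h.int u
  · refine star_v G S R v hv (hBS hvB) M M hMv (fun _ _ _ _ => Iff.rfl) (U ∪ N) ?_ _ ?_
    · intro u
      rw [Finset.mem_union, hU, hNm]
      have m := hMv v u
      have := hN u
      have k1 := @hRB u
      have k2 := @hBS u
      tauto
    · rw [Finset.prod_union hd, ← mul_assoc]
      apply prod_v _ _ _ hvN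
      · intro u hu
        have h1 : u ∉ U := fun hh => (Finset.disjoint_left.1 hd) hh hu
        simp [ind_apply, h1, h.root u ((hNm u).1 hu).2]
      · exact prod_u _ _ U hvU hηv h.co

lemma del_vw (G : SimpleGraph V) (S B R : Set V) (v r w : V) (hvB : v ∈ B) (hv : v ∉ R)
    (hRB : R ⊆ B) (hBS : B ⊆ S) (hr : r ∈ R) (hw : w ∈ B) (hwR : w ∉ R)
    (hvr : G.Adj v r) (hvw : G.Adj v w)
    (hN : ∀ b ∈ B, G.Adj v b → b = r ∨ b = w)
    (M : SimpleGraph V) (η : V →₀ ℕ)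
    (h : Good G (S \ {v}) ((B ∪ {u | u ∈ S ∧ G.Adj v u}) \ {v}) R M η) :
    ∃ M' η', Good G S B R M' η' := by
  classical
  have hMv : ∀ a b, M.Adj a b → a ≠ v := fun a b hab => (h.inS a b hab).1.2
  let U := Finset.univ.filter (fun u => G.Adj v u ∧ u ∈ S ∧ u ∉ B)
  have hU : ∀ u, u ∈ U ↔ G.Adj v u ∧ u ∈ S ∧ u ∉ B := by simp [U]
  have hvU : v ∉ U := fun hh => ((hU v).1 hh).1.ne rfl
  have hwU : w ∉ U := fun hh => ((hU w).1 hh).2.2 hw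
  have hrU : r ∉ U := fun hh => ((hU r).1 hh).2.2 (hRB hr)
  have hrw : r ≠ w := by rintro rfl; exact hwR hr
  have hvS := hBS hvB
  have hηv : η v = 0 := h.out v (by simp)
  have hηr : η r = 0 := h.root r hr
  have hUη : ∀ u ∈ U, η u ≤ 2 := by
    intro u hu
    have h2 := (hU u).1 hu
    exact h.bd2 u ⟨Or.inr ⟨h2.2.1, h2.1⟩, h2.1.ne'⟩
  have hRU : ∀ u ∈ R, u ∉ U := fun u hu hh => ((hU u).1 hh).2.2 (hRB hu)
  set Q := graphPoly (KG G M (S \ {v}) R) with hQ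
  have hQv : ∀ α, coeff α Q ≠ 0 → α v = 0 := fun α hα => KG_iso _ _ _ _ hα (by simp)
  have hstar : ∀ u, u ∈ insert r (insert w U) ↔ G.Adj v u ∧ u ∈ S ∧ ¬ M.Adj v u := by
    intro u
    rw [Finset.mem_insert, Finset.mem_insert, hU]
    have m := hMv v u
    have := hN u
    have k2 := @hBS u
    have k3 := hBS hw
    have k4 := hBS (hRB hr)
    constructor
    · rintro (rfl | rfl | hh) <;> tauto
    · tauto
  by_cases hz : coeff (η + Finsupp.single v 1 + ind U)
      ((Q * ∏ u ∈ U, (X v - X u)) * (X v - X w)) = 0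
  · obtain ⟨θ, hθη, j, hj, hco⟩ := exchange Q η U hvU hvw.ne hwU hηv hQv h.co hz
    have hjU := (hU j).1 hj
    have hjw : j ≠ w := by rintro rfl; exact hjU.2.2 hw
    have hjr : j ≠ r := by rintro rfl; exact hjU.2.2 (hRB hr)
    have hjv : j ≠ v := hjU.1.ne'
    have hθ : ∀ u, u ≠ w → η u = θ u := by
      intro u hu; rw [hθη]; simp [Finsupp.single_apply, Ne.symm hu]
    have hηw : η w = θ w + 1 := by rw [hθη]; simp
    have hθv : θ v = 0 := by rw [← hθ v hvw.ne]; exact hηv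
    have hθr : θ r = 0 := by rw [← hθ r hrw]; exact hηr
    by_cases hcj : Cov M j
    · -- keep the matching
      have hwv := hvw.ne
      set η' := θ + Finsupp.single j 1 + ind (insert w U) + Finsupp.single v 1 with hη'
      have eo : ∀ u, u ≠ v → η' u = η u + (if u ∈ U then 1 else 0) +
          (if u = j then 1 else 0) := by
        intro u hu
        by_cases e1 : u = w
        · subst e1
          simp [hη', ind_apply, Finsupp.single_apply, Ne.symm hu, hwU, hjw, hjw.symm, hηw]
        · rw [hθ u e1]
          simp [hη', ind_apply, Finsupp.single_apply, Ne.symm hu, e1, eq_comm]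
          omega
      have ev : η' v = 1 := by
        simp [hη', ind_apply, hvU, hθv, hwv, hjv]
      have eB : ∀ u, u ≠ v → u ∈ B → η' u = η u := by
        intro u hu hb
        rw [eo u hu, if_neg (fun hh => ((hU u).1 hh).2.2 hb),
          if_neg (by rintro rfl; exact hjU.2.2 hb), add_zero, add_zero]
      refine ⟨M, η', h.le, h.mat, ?_, ?_, ?_, ?_, ?_, ?_, ?_⟩
      · intro a b hab
        exact ⟨(h.inS a b hab).1.1, (h.inS a b hab).2⟩
      · intro u hu
        rw [eo u (by rintro rfl; exact hu hvS), if_neg (fun hh => hu ((hU u).1 hh).2.1),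
          h.out u (fun hh => hu hh.1), if_neg (by rintro rfl; exact hu hjU.2.1)]
      · intro u hu
        rw [eB u (by rintro rfl; exact hv hu) (hRB hu), h.root u hu]
      · intro u hu hc
        have huv : u ≠ v := by
          rintro rfl; obtain ⟨w, hw⟩ := hc; exact hMv _ _ hw rfl
        rw [eB u huv hu]
        exact h.bd1 u ⟨Or.inl hu, huv⟩ hc
      · intro u hu
        by_cases huv : u = v
        · subst huv; rw [ev]; omega
        · rw [eB u huv hu]; exact h.bd2 u ⟨Or.inl hu, huv⟩
      · intro u
        by_cases huv : u = v
        · subst huv; rw [ev]; omega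
        · rw [eo u huv]
          by_cases huj : u = j
          · subst huj
            have := h.bd1 u ⟨Or.inr ⟨hjU.2.1, hjU.1⟩, huv⟩ hcj
            simp only [hj, if_true]; omega
          · rw [if_neg huj]
            split_ifs with h1
            · have := hUη u h1; omega
            · exact h.int u
      · refine star_v G S R v hv hvS M M hMv (fun _ _ _ _ => Iff.rfl) _ hstar _ ?_
        rw [Finset.prod_insert (by simp [hrw, hrU]), mul_comm (X v - X r), ← mul_assoc,
          step_v _ _ hvr.ne]
        · exact prod_u _ _ _ (by simp [hwv, hvU]) (by simp [hθv, Finsupp.single_apply, hjv]) hco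
        · simp [ind_apply, hrU, hrw, hθr, Finsupp.single_apply, hjr]
    · -- add the edge `v j` to the matching
      have hwv := hvw.ne
      let M' : SimpleGraph V :=
        { Adj := fun a b => M.Adj a b ∨ (a = v ∧ b = j) ∨ (a = j ∧ b = v)
          symm := ⟨by
            rintro a b (h | h | h)
            · exact Or.inl h.symm
            · exact Or.inr (Or.inr h.symm)
            · exact Or.inr (Or.inl h.symm)⟩
          loopless := ⟨by
            rintro a (h | h | h)
            · exact M.loopless.irrefl a h
            · exact hjv (h.2.symm.trans h.1)
            · exact hjv (h.1.symm.trans h.2)⟩ }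
      have hM' : ∀ a b, M'.Adj a b ↔ M.Adj a b ∨ (a = v ∧ b = j) ∨ (a = j ∧ b = v) :=
        fun _ _ => Iff.rfl
      have hMv' : ∀ a b, M.Adj a b → b ≠ v := fun a b hab => hMv b a hab.symm
      have hMj : ∀ a b, M.Adj a b → a ≠ j := by
        rintro a b hab rfl; exact hcj ⟨b, hab⟩
      set η' := θ + Finsupp.single j 1 + ind (insert w (U.erase j)) + Finsupp.single v 1 with hη'
      have eo : ∀ u, u ≠ v → η' u = η u + (if u ∈ U then 1 else 0) := by
        intro u hu
        by_cases e1 : u = w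
        · subst e1
          simp [hη', ind_apply, Finsupp.single_apply, Ne.symm hu, hwU, hjw, hηw]
        · rw [hθ u e1]
          by_cases e2 : u = j
          · subst e2
            simp [hη', ind_apply, Finsupp.single_apply, Ne.symm hu, e1, hj]
          · simp [hη', ind_apply, Finsupp.single_apply, Ne.symm hu, e1, e2, Ne.symm e2]
      have ev : η' v = 1 := by
        simp [hη', ind_apply, hvU, hθv, hwv, hjv]
      have eB : ∀ u, u ≠ v → u ∈ B → η' u = η u := by
        intro u hu hb
        rw [eo u hu, if_neg (fun hh => ((hU u).1 hh).2.2 hb), add_zero]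
      refine ⟨M', η', ?_, ?_, ?_, ?_, ?_, ?_, ?_, ?_, ?_⟩
      · rintro a b (hab | ⟨rfl, rfl⟩ | ⟨rfl, rfl⟩)
        · exact h.le a b hab
        · exact hjU.1
        · exact hjU.1.symm
      · rintro a b c (hab | ⟨rfl, rfl⟩ | ⟨rfl, rfl⟩) (hac | ⟨h1, h2⟩ | ⟨h1, h2⟩)
        · exact h.mat a b c hab hac
        · exact absurd h1 (hMv _ _ hab)
        · exact absurd h1 (hMj _ _ hab)
        · exact absurd rfl (hMv _ _ hac)
        · exact h2.symm
        · exact absurd h1.symm hjv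
        · exact absurd rfl (hMj _ _ hac)
        · exact absurd h1 hjv
        · exact h2.symm
      · rintro a b (hab | ⟨rfl, rfl⟩ | ⟨rfl, rfl⟩)
        · exact ⟨(h.inS a b hab).1.1, (h.inS a b hab).2⟩
        · exact ⟨hvS, hv⟩
        · exact ⟨hjU.2.1, fun hh => hjU.2.2 (hRB hh)⟩
      · intro u hu
        rw [eo u (by rintro rfl; exact hu hvS), if_neg (fun hh => hu ((hU u).1 hh).2.1),
          h.out u (fun hh => hu hh.1)]
      · intro u hu
        rw [eB u (by rintro rfl; exact hv hu) (hRB hu), h.root u hu]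
      · intro u hu hc
        by_cases huv : u = v
        · subst huv; rw [ev]
        · rw [eB u huv hu]
          refine h.bd1 u ⟨Or.inl hu, huv⟩ ?_
          obtain ⟨t, ht | ht | ht⟩ := hc
          · exact ⟨t, ht⟩
          · exact absurd ht.1 huv
          · exact absurd hu (by rw [ht.1]; exact hjU.2.2)
      · intro u hu
        by_cases huv : u = v
        · subst huv; rw [ev]; omega
        · rw [eB u huv hu]; exact h.bd2 u ⟨Or.inl hu, huv⟩
      · intro u
        by_cases huv : u = v
        · subst huv; rw [ev]; omega
        · rw [eo u huv]
          split_ifs with h1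
          · have := hUη u h1; omega
          · exact h.int u
      · refine star_v G S R v hv hvS M M' hMv ?_ (insert r (insert w (U.erase j))) ?_ _ ?_
        · intro a b ha hb; rw [hM']; tauto
        · intro u
          have := hstar u
          rw [hM']
          simp only [Finset.mem_insert, Finset.mem_erase] at this ⊢
          have m := hMv v u
          by_cases huj : u = j
          · subst huj; simp [hjr, hjw]
          · simp only [huj, ne_eq, not_false_eq_true, true_and]
            rw [this]
            simp [hjv.symm]
        · rw [Finset.prod_insert (by simp [hrw, hrU]), mul_comm (X v - X r), ← mul_assoc,
            step_v _ _ hvr.ne]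
          · exact prod_u _ _ _ (by simp [hwv, hvU]) (by simp [hθv, Finsupp.single_apply, hjv]) hco
          · simp [ind_apply, hrU, hrw, hθr, Finsupp.single_apply, hjr]
  · set η' := η + Finsupp.single v 1 + ind U + Finsupp.single v 1 with hη'
    have eo : ∀ u, u ≠ v → η' u = η u + (if u ∈ U then 1 else 0) := by
      intro u hu
      simp [hη', ind_apply, Finsupp.single_apply, Ne.symm hu]
    have ev : η' v = 2 := by
      simp [hη', ind_apply, hvU, hηv]
    have eB : ∀ u, u ≠ v → u ∈ B → η' u = η u := by
      intro u hu hb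
      rw [eo u hu, if_neg (fun hh => ((hU u).1 hh).2.2 hb), add_zero]
    refine ⟨M, η', h.le, h.mat, ?_, ?_, ?_, ?_, ?_, ?_, ?_⟩
    · intro a b hab
      exact ⟨(h.inS a b hab).1.1, (h.inS a b hab).2⟩
    · intro u hu
      rw [eo u (by rintro rfl; exact hu hvS), if_neg (fun hh => hu ((hU u).1 hh).2.1),
        h.out u (fun hh => hu hh.1)]
    · intro u hu
      rw [eB u (by rintro rfl; exact hv hu) (hRB hu), h.root u hu]
    · intro u hu hc
      have huv : u ≠ v := by
        rintro rfl; obtain ⟨w, hw⟩ := hc; exact hMv _ _ hw rfl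
      rw [eB u huv hu]
      exact h.bd1 u ⟨Or.inl hu, huv⟩ hc
    · intro u hu
      by_cases huv : u = v
      · subst huv; rw [ev]
      · rw [eB u huv hu]; exact h.bd2 u ⟨Or.inl hu, huv⟩
    · intro u
      by_cases huv : u = v
      · subst huv; rw [ev]; omega
      · rw [eo u huv]
        split_ifs with h1
        · have := hUη u h1; omega
        · exact h.int u
    · refine star_v G S R v hv hvS M M hMv (fun _ _ _ _ => Iff.rfl) _ hstar _ ?_
      rw [Finset.prod_insert (by simp [hrw, hrU]), Finset.prod_insert hwU, mul_comm (X v - X r),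
        mul_comm (X v - X w), ← mul_assoc, ← mul_assoc, step_v _ _ hvr.ne]
      · exact hz
      · simp [ind_apply, hrU, hηr, Finsupp.single_apply, hvr.ne]

lemma glue (G : SimpleGraph V) (S S₁ S₂ B R : Set V) (v x : V) (hvR : v ∉ R)
    (hvx : G.Adj v x) (hRS : R ⊆ S₁) (hS : S = S₁ ∪ S₂) (hI : ∀ u, u ∈ S₁ → u ∈ S₂ → u = v ∨ u = x)
    (hv1 : v ∈ S₁) (hv2 : v ∈ S₂) (hx1 : x ∈ S₁) (hx2 : x ∈ S₂)
    (hcross : ∀ a b, a ∈ S₁ → b ∈ S₂ → G.Adj a b → a ∈ S₂ ∨ b ∈ S₁) (hBS : B ⊆ S)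
    (M₁ M₂ : SimpleGraph V) (η₁ η₂ : V →₀ ℕ)
    (h1 : Good G S₁ (B ∩ S₁) R M₁ η₁) (h2 : Good G S₂ (B ∩ S₂) {v, x} M₂ η₂) :
    Good G S B R (M₁ ⊔ M₂) (η₁ + η₂) := by
  classical
  have h2S : ∀ a b, M₂.Adj a b → a ∈ S₂ ∧ a ∉ S₁ := by
    intro a b hab
    have := h2.inS a b hab
    refine ⟨this.1, fun hh => this.2 ?_⟩
    simpa using hI a hh this.1
  have hz1 : ∀ u, u ∉ S₁ → η₁ u = 0 := h1.out
  have hz2 : ∀ u, u ∈ S₁ → η₂ u = 0 := by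
    intro u hu
    by_cases hu2 : u ∈ S₂
    · exact h2.root u (by simpa using hI u hu hu2)
    · exact h2.out u hu2
  refine ⟨?_, ?_, ?_, ?_, ?_, ?_, ?_, ?_, ?_⟩
  · rintro a b (hab | hab)
    · exact h1.le a b hab
    · exact h2.le a b hab
  · rintro a b c (hab | hab) (hac | hac)
    · exact h1.mat a b c hab hac
    · exact absurd (h1.inS a b hab).1 (h2S a c hac).2
    · exact absurd (h1.inS a c hac).1 (h2S a b hab).2
    · exact h2.mat a b c hab hac
  · rintro a b (hab | hab)
    · exact ⟨by rw [hS]; exact Or.inl (h1.inS a b hab).1, (h1.inS a b hab).2⟩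
    · exact ⟨by rw [hS]; exact Or.inr (h2S a b hab).1, fun hh => (h2S a b hab).2 (hRS hh)⟩
  · intro u hu
    rw [hS, Set.mem_union, not_or] at hu
    simp [h1.out u hu.1, h2.out u hu.2]
  · intro u hu
    simp [h1.root u hu, hz2 u (hRS hu)]
  · intro u hu hc
    by_cases hu1 : u ∈ S₁
    · simp only [Finsupp.add_apply, hz2 u hu1, add_zero]
      refine h1.bd1 u ⟨hu, hu1⟩ ?_
      obtain ⟨t, ht | ht⟩ := hc
      · exact ⟨t, ht⟩
      · exact absurd hu1 (h2S u t ht).2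
    · simp only [Finsupp.add_apply, hz1 u hu1, zero_add]
      have hu2 : u ∈ S₂ := by
        have := hBS hu; rw [hS] at this; exact this.resolve_left hu1
      refine h2.bd1 u ⟨hu, hu2⟩ ?_
      obtain ⟨t, ht | ht⟩ := hc
      · exact absurd (h1.inS u t ht).1 hu1
      · exact ⟨t, ht⟩
  · intro u hu
    by_cases hu1 : u ∈ S₁
    · simp only [Finsupp.add_apply, hz2 u hu1, add_zero]
      exact h1.bd2 u ⟨hu, hu1⟩
    · simp only [Finsupp.add_apply, hz1 u hu1, zero_add]
      have hu2 : u ∈ S₂ := by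
        have := hBS hu; rw [hS] at this; exact this.resolve_left hu1
      exact h2.bd2 u ⟨hu, hu2⟩
  · intro u
    by_cases hu1 : u ∈ S₁
    · simp only [Finsupp.add_apply, hz2 u hu1, add_zero]
      exact h1.int u
    · simp only [Finsupp.add_apply, hz1 u hu1, zero_add]
      exact h2.int u
  · rw [graphPoly_union (KG G M₁ S₁ R) (KG G M₂ S₂ {v, x}) (KG G (M₁ ⊔ M₂) S R)]
    · obtain ⟨d, hd⟩ := graphPoly_homog (KG G M₂ S₂ {v, x})
      refine coeff_mul_unique _ _ _ _ hd h1.co h2.co ?_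
      intro u
      by_cases hu1 : u ∈ S₁
      · exact Or.inl (hz2 u hu1)
      · exact Or.inr (fun α hα => KG_iso _ _ _ _ hα hu1)
    · intro a b
      constructor
      · rintro ⟨hG, ha, hb, hR, hM⟩
        have hM1 : ¬ M₁.Adj a b := fun h => hM (Or.inl h)
        have hM2 : ¬ M₂.Adj a b := fun h => hM (Or.inr h)
        by_cases h12 : a ∈ S₁ ∧ b ∈ S₁
        · exact Or.inl ⟨hG, h12.1, h12.2, hR, hM1⟩
        · have h22 : a ∈ S₂ ∧ b ∈ S₂ := by
            rw [hS] at ha hb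
            have c1 := hcross a b
            have c2 := hcross b a
            have c3 := hG.symm
            rcases ha with ha | ha <;> rcases hb with hb | hb
            · exact absurd ⟨ha, hb⟩ h12
            · rcases c1 ha hb hG with h | h
              · exact ⟨h, hb⟩
              · exact absurd ⟨ha, h⟩ h12
            · rcases c2 hb ha c3 with h | h
              · exact ⟨ha, h⟩
              · exact absurd ⟨h, hb⟩ h12
            · exact ⟨ha, hb⟩
          refine Or.inr ⟨hG, h22.1, h22.2, ?_, hM2⟩
          rintro ⟨e1, e2⟩
          apply h12
          constructor
          · rcases e1 with rfl | rfl <;> assumption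
          · rcases e2 with rfl | rfl <;> assumption
      · rintro (⟨hG, ha, hb, hR, hM⟩ | ⟨hG, ha, hb, hR, hM⟩)
        · refine ⟨hG, by rw [hS]; exact Or.inl ha, by rw [hS]; exact Or.inl hb, hR, ?_⟩
          rintro (h | h)
          · exact hM h
          · exact (h2S a b h).2 ha
        · refine ⟨hG, by rw [hS]; exact Or.inr ha, by rw [hS]; exact Or.inr hb, ?_, ?_⟩
          · rintro ⟨r1, r2⟩
            exact hR ⟨hI a (hRS r1) ha, hI b (hRS r2) hb⟩
          · rintro (h | h)
            · exact hR ⟨hI a (h1.inS a b h).1 ha, hI b (h1.inS b a h.symm).1 hb⟩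
            · exact hM h
    · intro a b ha hb
      have := hI a ha.2.1 hb.2.1
      have h' := hI b ha.2.2.1 hb.2.2.1
      exact hb.2.2.2.1 ⟨by simpa using this, by simpa using h'⟩

end main
section induction
variable {V : Type*}

lemma apex_ss (G : SimpleGraph V) (B : Set V) (u v : V) :
    (addApex G B).Adj (some u) (some v) ↔ G.Adj u v := by
  unfold addApex
  rw [SimpleGraph.fromRel_adj]
  simp only [G.adj_comm v u, or_self, ne_eq, Option.some.injEq]
  exact ⟨fun h => h.2, fun h => ⟨h.ne, h⟩⟩

lemma apex_ns (G : SimpleGraph V) (B : Set V) (v : V) :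
    (addApex G B).Adj none (some v) ↔ v ∈ B := by
  unfold addApex
  rw [SimpleGraph.fromRel_adj]
  simp

lemma sep (G : SimpleGraph V) (S : Set V) (v x : V) (hv : v ∈ S) (hx : x ∈ S)
    (h : ¬ (G.induce (S \ {v, x})).Preconnected) :
    ∃ S₁ S₂ : Set V, S = S₁ ∪ S₂ ∧ (∀ u, u ∈ S₁ → u ∈ S₂ → u = v ∨ u = x) ∧
      v ∈ S₁ ∧ v ∈ S₂ ∧ x ∈ S₁ ∧ x ∈ S₂ ∧
      (∀ a b, a ∈ S₁ → b ∈ S₂ → G.Adj a b → a ∈ S₂ ∨ b ∈ S₁) ∧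
      (∃ p ∈ S₁, p ∉ S₂) ∧ (∃ q ∈ S₂, q ∉ S₁) := by
  unfold SimpleGraph.Preconnected at h
  push Not at h
  obtain ⟨p, q, hpq⟩ := h
  have hp := p.2
  have hq := q.2
  simp only [Set.mem_sdiff, Set.mem_insert_iff, Set.mem_singleton_iff, not_or] at hp hq
  refine ⟨{u | u = v ∨ u = x ∨ ∃ h : u ∈ S \ {v, x}, (G.induce (S \ {v, x})).Reachable p ⟨u, h⟩},
    {u | u = v ∨ u = x ∨ ∃ h : u ∈ S \ {v, x}, ¬ (G.induce (S \ {v, x})).Reachable p ⟨u, h⟩},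
    ?_, ?_, Or.inl rfl, Or.inl rfl, Or.inr (Or.inl rfl), Or.inr (Or.inl rfl), ?_,
    ⟨p.1, Or.inr (Or.inr ⟨p.2, SimpleGraph.Reachable.refl _⟩), ?_⟩,
    ⟨q.1, Or.inr (Or.inr ⟨q.2, hpq⟩), ?_⟩⟩
  · ext u
    constructor
    · intro hu
      by_cases h1 : u = v
      · exact Or.inl (Or.inl h1)
      by_cases h2 : u = x
      · exact Or.inl (Or.inr (Or.inl h2))
      have h3 : u ∈ S \ {v, x} := ⟨hu, by simp [h1, h2]⟩
      by_cases h4 : (G.induce (S \ {v, x})).Reachable p ⟨u, h3⟩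
      · exact Or.inl (Or.inr (Or.inr ⟨h3, h4⟩))
      · exact Or.inr (Or.inr (Or.inr ⟨h3, h4⟩))
    · rintro ((rfl | rfl | ⟨h, -⟩) | (rfl | rfl | ⟨h, -⟩))
      · exact hv
      · exact hx
      · exact h.1
      · exact hv
      · exact hx
      · exact h.1
  · rintro u (h | h | ⟨h, h1⟩) (h' | h' | ⟨h', h2⟩)
    all_goals first
      | exact Or.inl h
      | exact Or.inr h
      | exact Or.inl h'
      | exact Or.inr h'
      | exact absurd h1 h2
  · rintro a b (h | h | ⟨h, h1⟩) (h' | h' | ⟨h', h2⟩) hab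
    all_goals first
      | exact Or.inl (Or.inl h)
      | exact Or.inl (Or.inr (Or.inl h))
      | exact Or.inr (Or.inl h')
      | exact Or.inr (Or.inr (Or.inl h'))
      | skip
    refine absurd (h1.trans (SimpleGraph.Adj.reachable ?_)) h2
    exact hab
  · rintro (h | h | ⟨h, h1⟩)
    · exact hp.2.1 h
    · exact hp.2.2 h
    · exact h1 (SimpleGraph.Reachable.refl _)
  · rintro (h | h | ⟨h, h1⟩)
    · exact hq.2.1 h
    · exact hq.2.2 h
    · exact hpq h1

lemma precon_transfer (G : SimpleGraph V) (B0 S : Set V) (v x : V)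
    (h : (G.induce (S \ {v, x})).Preconnected) :
    ((addApex G B0).induce ((some '' (S \ {v})) \ {some x})).Preconnected := by
  have hm : ∀ u : ↥(S \ {v, x}), some u.1 ∈ (some '' (S \ {v})) \ {some x} := by
    rintro ⟨u, hu⟩
    simp only [Set.mem_sdiff, Set.mem_insert_iff, Set.mem_singleton_iff, not_or] at hu
    refine ⟨⟨u, ⟨hu.1, hu.2.1⟩, rfl⟩, ?_⟩
    simpa using hu.2.2
  let f : G.induce (S \ {v, x}) →g (addApex G B0).induce ((some '' (S \ {v})) \ {some x}) :=
    { toFun := fun u => ⟨some u.1, hm u⟩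
      map_rel' := by
        intro a b hab
        exact (apex_ss G B0 a.1 b.1).2 hab }
  refine h.map f ?_
  rintro ⟨_, ⟨u, hu, rfl⟩, hx⟩
  refine ⟨⟨u, hu.1, ?_⟩, rfl⟩
  have h1 : u ≠ v := hu.2
  have h2 : u ≠ x := fun e => hx (by rw [e]; rfl)
  simp [h1, h2]

structure Cfg (G : SimpleGraph V) (B0 S B R : Set V) (A : Set (Option V)) : Prop where
  RB : R ⊆ B
  BS : B ⊆ S
  cl : ∀ a ∈ R, ∀ b ∈ R, a ≠ b → G.Adj a b
  conn : ((addApex G B0).induce A).Connected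
  disj : Disjoint A (some '' S)
  adj : ∀ b ∈ B, AdjS (addApex G B0) A {some b}

lemma Cfg.ext {G : SimpleGraph V} {B0 S B R : Set V} {A : Set (Option V)} (h : Cfg G B0 S B R A)
    (r : V) (hr : r ∈ B) :
    Cfg G B0 (S \ {r}) ((B ∪ {u | u ∈ S ∧ G.Adj r u}) \ {r}) (R \ {r}) (A ∪ {some r}) where
  RB := fun u hu => ⟨Or.inl (h.RB hu.1), hu.2⟩
  BS := by
    rintro u ⟨hu | hu, hr⟩
    · exact ⟨h.BS hu, hr⟩
    · exact ⟨hu.1, hr⟩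
  cl := fun a ha b hb => h.cl a ha.1 b hb.1
  conn := by
    obtain ⟨p, hp, q, hq, hpq⟩ := h.adj r hr
    exact SimpleGraph.connected_induce_union h.conn.preconnected
      (conn_singleton _ _).preconnected hp hq hpq
  disj := by
    rw [Set.disjoint_left]
    rintro a (ha | ha) ⟨u, hu, rfl⟩
    · exact Set.disjoint_left.1 h.disj ha ⟨u, hu.1, rfl⟩
    · exact hu.2 (by simpa using ha)
  adj := by
    rintro b ⟨hb | hb, hne⟩
    · exact (h.adj b hb).mono Set.subset_union_left subset_rfl
    · exact ⟨some r, Or.inr rfl, some b, rfl, (apex_ss _ _ _ _).2 hb.2⟩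

variable [Fintype V] [LinearOrder V]

lemma Good.mono0 {G : SimpleGraph V} {S B B' : Set V} {r : V} {M : SimpleGraph V} {η : V →₀ ℕ}
    (h : Good G S B {r} M η) (hB : B' ⊆ B) : Good G S B' ∅ M η := by
  have e : KG G M S {r} = KG G M S ∅ := by
    ext a b
    constructor
    · rintro ⟨h1, h2, h3, -, h5⟩
      exact ⟨h1, h2, h3, fun hh => hh.1, h5⟩
    · rintro ⟨h1, h2, h3, -, h5⟩
      refine ⟨h1, h2, h3, ?_, h5⟩
      rintro ⟨e1, e2⟩
      exact h1.ne ((show a = r from e1).trans (show b = r from e2).symm)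
  exact ⟨h.le, h.mat, fun a b hab => ⟨(h.inS a b hab).1, fun hh => hh⟩, h.out,
    fun u hu => hu.elim, fun u hu => h.bd1 u (hB hu), fun u hu => h.bd2 u (hB hu), h.int,
    e ▸ h.co⟩

lemma core (G : SimpleGraph V) (B0 : Set V) (hH : (addApex G B0).IsPlanar) (n : ℕ)
    (IH : ∀ S B R : Set V, ∀ A : Set (Option V), S.ncard < n → Cfg G B0 S B R A →
      ∃ M η, Good G S B R M η)
    (S B R : Set V) (A : Set (Option V)) (hn : S.ncard = n) (h : Cfg G B0 S B R A)
    (hR : R.Nonempty) : ∃ M η, Good G S B R M η := by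
  classical
  have hsub : ∀ S' : Set V, S' ⊂ S → S'.ncard < n := fun S' hS' =>
    hn ▸ Set.ncard_lt_ncard hS' (Set.toFinite _)
  have hdel : ∀ r ∈ B, (S \ {r}).ncard < n := fun r hr =>
    hsub _ (Set.diff_singleton_ssubset.2 (h.BS hr))
  by_cases hA : ∃ r ∈ R, ∀ b ∈ B, G.Adj r b → b ∈ R
  · obtain ⟨r, hr, hN⟩ := hA
    obtain ⟨M, η, hg⟩ := IH _ _ _ _ (hdel r (h.RB hr)) (h.ext r (h.RB hr))
    exact ⟨M, del_root G S B R r hr h.RB h.BS hN M η hg⟩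
  obtain ⟨r, hr⟩ := hR
  push Not at hA
  obtain ⟨v, hvB, hrv, hvR⟩ := hA r hr
  have hvS := h.BS hvB
  by_cases hB1 : ∃ x ∈ B, G.Adj v x ∧ ¬ (G.induce (S \ {v, x})).Preconnected
  · obtain ⟨x, hxB, hvx, hpc⟩ := hB1
    obtain ⟨S₁, S₂, hS, hI, hv1, hv2, hx1, hx2, hcr, ⟨p, hp1, hp2⟩, ⟨q, hq2, hq1⟩⟩ :=
      sep G S v x hvS (h.BS hxB) hpc
    -- the symmetric gluing step
    have key : ∀ T₁ T₂ : Set V, S = T₁ ∪ T₂ → (∀ u, u ∈ T₁ → u ∈ T₂ → u = v ∨ u = x) →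
        v ∈ T₁ → v ∈ T₂ → x ∈ T₁ → x ∈ T₂ →
        (∀ a b, a ∈ T₁ → b ∈ T₂ → G.Adj a b → a ∈ T₂ ∨ b ∈ T₁) →
        (∃ p ∈ T₁, p ∉ T₂) → (∃ q ∈ T₂, q ∉ T₁) → R ⊆ T₁ → ∃ M η, Good G S B R M η := by
      rintro T₁ T₂ hT hTI hv1 hv2 hx1 hx2 hTc ⟨p, hp1, hp2⟩ ⟨q, hq2, hq1⟩ hRT
      have s1 : T₁ ⊆ S := by rw [hT]; exact Set.subset_union_left
      have s2 : T₂ ⊆ S := by rw [hT]; exact Set.subset_union_right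
      have n1 := hsub T₁ ⟨s1, fun hh => hq1 (hh (s2 hq2))⟩
      have n2 := hsub T₂ ⟨s2, fun hh => hp2 (hh (s1 hp1))⟩
      obtain ⟨M₁, η₁, g1⟩ := IH T₁ (B ∩ T₁) R A n1
        ⟨fun u hu => ⟨h.RB hu, hRT hu⟩, Set.inter_subset_right, h.cl, h.conn,
          h.disj.mono_right (Set.image_mono s1), fun b hb => h.adj b hb.1⟩
      obtain ⟨M₂, η₂, g2⟩ := IH T₂ (B ∩ T₂) {v, x} A n2
        ⟨by
          rintro u (rfl | rfl)
          · exact ⟨hvB, hv2⟩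
          · exact ⟨hxB, hx2⟩, Set.inter_subset_right, by
          rintro a (rfl | rfl) b (rfl | rfl) hab
          · exact absurd rfl hab
          · exact hvx
          · exact hvx.symm
          · exact absurd rfl hab, h.conn,
          h.disj.mono_right (Set.image_mono s2), fun b hb => h.adj b hb.1⟩
      exact ⟨_, _, glue G S T₁ T₂ B R v x hvR hvx hRT hT hTI hv1 hv2 hx1 hx2 hTc h.BS
        M₁ M₂ η₁ η₂ g1 g2⟩
    by_cases hR1 : R ⊆ S₁
    · exact key S₁ S₂ hS hI hv1 hv2 hx1 hx2 hcr ⟨p, hp1, hp2⟩ ⟨q, hq2, hq1⟩ hR1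
    · refine key S₂ S₁ (by rw [hS, Set.union_comm]) (fun u a b => hI u b a) hv2 hv1 hx2 hx1
        (fun a b ha hb hab => (hcr b a hb ha hab.symm).symm) ⟨q, hq2, hq1⟩ ⟨p, hp1, hp2⟩ ?_
      rw [Set.not_subset] at hR1
      obtain ⟨c, hcR, hc1⟩ := hR1
      have hin : ∀ u ∈ R, u ∈ S₁ ∨ u ∈ S₂ := fun u hu => by
        have := h.BS (h.RB hu)
        rwa [hS] at this
      have hc2 : c ∈ S₂ := (hin c hcR).resolve_left hc1
      intro u hu
      rcases hin u hu with h1 | h1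
      · by_cases huc : u = c
        · rw [huc]; exact hc2
        · exact (hcr u c h1 hc2 (h.cl u hu c hcR huc)).resolve_right hc1
      · exact h1
  push Not at hB1
  have h3 : ∀ x y z, x ∈ B → y ∈ B → z ∈ B → G.Adj v x → G.Adj v y → G.Adj v z →
      x ≠ y → x ≠ z → y ≠ z → False := by
    intro x y z hx hy hz jx jy jz hxy hxz hyz
    have hmem : ∀ u, u ∈ B → G.Adj v u → some u ∈ (some '' (S \ {v}) : Set (Option V)) :=
      fun u hu hj => ⟨u, ⟨h.BS hu, hj.ne'⟩, rfl⟩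
    refine triple (addApex G B0) hH A (some '' (S \ {v})) (some v) (some x) (some y) (some z)
      h.conn (h.disj.mono_right (Set.image_mono Set.sdiff_subset)) ?_ ?_
      (hmem x hx jx) (hmem y hy jy) (hmem z hz jz) (by simpa using hxy) (by simpa using hxz)
      (by simpa using hyz)
      (h.adj v hvB) (h.adj x hx) (h.adj y hy) (h.adj z hz)
      ((apex_ss _ _ _ _).2 jx) ((apex_ss _ _ _ _).2 jy) ((apex_ss _ _ _ _).2 jz)
      (precon_transfer _ _ _ _ _ (hB1 x hx jx)) (precon_transfer _ _ _ _ _ (hB1 y hy jy))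
      (precon_transfer _ _ _ _ _ (hB1 z hz jz))
    · exact fun hh => Set.disjoint_left.1 h.disj hh ⟨v, hvS, rfl⟩
    · rintro ⟨u, hu, e⟩
      exact hu.2 (by simpa using e)
  have hext := h.ext v hvB
  rw [Set.sdiff_singleton_eq_self hvR] at hext
  obtain ⟨M, η, hg⟩ := IH _ _ _ _ (hdel v hvB) hext
  by_cases hw : ∃ w ∈ B, G.Adj v w ∧ w ∉ R
  · obtain ⟨w, hwB, hvw, hwR⟩ := hw
    refine del_vw G S B R v r w hvB hvR h.RB h.BS hr hwB hwR hrv.symm hvw ?_ M η hg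
    intro b hb hvb
    by_contra hh
    push Not at hh
    exact h3 b r w hb (h.RB hr) hwB hvb hrv.symm hvw hh.1 hh.2 (by rintro rfl; exact hwR hr)
  · push Not at hw
    exact ⟨M, del_v G S B R v hvB hvR h.RB h.BS hw h3 M η hg⟩

lemma main_ind (G : SimpleGraph V) (B0 : Set V) (hH : (addApex G B0).IsPlanar) (n : ℕ) :
    ∀ S B R : Set V, ∀ A : Set (Option V), S.ncard = n → Cfg G B0 S B R A →
      ∃ M η, Good G S B R M η := by
  classical
  induction n using Nat.strong_induction_on with
  | _ n ih =>
  intro S B R A hn h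
  have IH : ∀ S B R : Set V, ∀ A : Set (Option V), S.ncard < n → Cfg G B0 S B R A →
      ∃ M η, Good G S B R M η := fun S B R A hlt hc => ih _ hlt S B R A rfl hc
  rcases R.eq_empty_or_nonempty with rfl | hR
  · rcases B.eq_empty_or_nonempty with rfl | ⟨r, hr⟩
    · rcases S.eq_empty_or_nonempty with rfl | ⟨r, hr⟩
      · refine ⟨⊥, 0, ?_, ?_, ?_, ?_, ?_, ?_, ?_, ?_, ?_⟩
        · exact fun a b hab => hab.elim
        · exact fun a b c hab => hab.elim
        · exact fun a b hab => hab.elim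
        · exact fun u hu => rfl
        · exact fun u hu => rfl
        · exact fun u hu => hu.elim
        · exact fun u hu => hu.elim
        · exact fun u => Nat.zero_le _
        · have : graphPoly (KG G ⊥ ∅ ∅) = 1 := by
            unfold graphPoly
            apply Finset.prod_eq_one
            intro p hp
            rw [Finset.mem_filter] at hp
            exact hp.2.1.2.1.elim
          rw [this]
          simp
      · have hlt : (S \ {r}).ncard < n := hn ▸ Set.ncard_lt_ncard
          (Set.diff_singleton_ssubset.2 hr) (Set.toFinite _)
        have c : Cfg G B0 (S \ {r}) ((({r} : Set V) ∪ {u | u ∈ S ∧ G.Adj r u}) \ {r})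
            (({r} : Set V) \ {r}) {some r} := by
          refine ⟨?_, ?_, ?_, conn_singleton _ _, ?_, ?_⟩
          · exact fun u hu => absurd hu.1 hu.2
          · rintro u ⟨hu | hu, h2⟩
            · exact absurd hu h2
            · exact ⟨hu.1, h2⟩
          · exact fun a ha => absurd ha.1 ha.2
          · rw [Set.disjoint_left]
            rintro a ha ⟨u, hu, rfl⟩
            exact hu.2 (by simpa using ha)
          · rintro u ⟨hu | hu, h2⟩
            · exact absurd hu h2
            · exact ⟨some r, rfl, some u, rfl, (apex_ss _ _ _ _).2 hu.2⟩
        obtain ⟨M, η, hg⟩ := IH _ _ _ _ hlt c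
        obtain ⟨η', hg'⟩ := del_root G S {r} {r} r rfl subset_rfl
          (Set.singleton_subset_iff.2 hr) (fun b hb _ => hb) M η hg
        exact ⟨M, η', hg'.mono0 (Set.empty_subset _)⟩
    · obtain ⟨M, η, hg⟩ := core G B0 hH n IH S B {r} A hn
        ⟨Set.singleton_subset_iff.2 hr, h.BS, by
          rintro a rfl b rfl hab
          exact absurd rfl hab, h.conn, h.disj, h.adj⟩ ⟨r, rfl⟩
      exact ⟨M, η, hg.mono0 subset_rfl⟩
  · exact core G B0 hH n IH S B R A hn h hR

end induction

end Stmt10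

/- For a plane graph `G` whose outer boundary is a cycle `C` containing the edge
`e = v₁v₂` (the boundary vertices are those of `C`, and they all lie on a common face,
encoded by planarity of `G` plus an apex joined to the boundary), there is a matching
`M` avoiding `v₁, v₂` and an exponent `η` with `η v₁ = η v₂ = 0`,
`η v ≤ 2 - d_M(v)` for the other boundary vertices and `η v ≤ 3` for interior
vertices, such that the coefficient of `x^η` in `P_{G - e - M}` is nonzero. -/
open scoped Classical in
theorem stmt_10 {V : Type*} [Fintype V] [LinearOrder V] (G : SimpleGraph V)
    (v₁ v₂ : V) (he : G.Adj v₁ v₂)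
    (C : G.Walk v₁ v₁) (hC : C.IsCycle) (heC : s(v₁, v₂) ∈ C.edges)
    (hplane : (addApex G {v | v ∈ C.support}).IsPlanar) :
    ∃ M : G.Subgraph, M.IsMatching ∧ v₁ ∉ M.verts ∧ v₂ ∉ M.verts ∧
      ∃ η : V →₀ ℕ,
        η v₁ = 0 ∧ η v₂ = 0 ∧
        (∀ v ∈ C.support, v ≠ v₁ → v ≠ v₂ →
          η v ≤ 2 - (if v ∈ M.verts then 1 else 0)) ∧
        (∀ v, v ∉ C.support → η v ≤ 3) ∧
        MvPolynomial.coeff η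
          (graphPoly ((G.deleteEdges {s(v₁, v₂)}).deleteEdges M.edgeSet)) ≠ 0 := by
  classical
  obtain ⟨M, η, hg⟩ := Stmt10.main_ind G {v | v ∈ C.support} hplane _ Set.univ
    {v | v ∈ C.support} {v₁, v₂} {none} rfl
    { RB := by
        rintro u (rfl | rfl)
        · exact C.start_mem_support
        · exact C.snd_mem_support_of_mem_edges heC
      BS := Set.subset_univ _
      cl := by
        rintro a (rfl | rfl) b (rfl | rfl) hab
        · exact absurd rfl hab
        · exact he
        · exact he.symm
        · exact absurd rfl hab
      conn := Stmt10.conn_singleton _ _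
      disj := by simp
      adj := fun b hb => ⟨none, rfl, some b, rfl, (Stmt10.apex_ns _ _ _).2 hb⟩ }
  have hcov : ∀ u ∈ ({v₁, v₂} : Set V), ¬ Stmt10.Cov M u := by
    rintro u hu ⟨w, hw⟩
    exact (hg.inS u w hw).2 hu
  let N : G.Subgraph :=
    { verts := {u | Stmt10.Cov M u}
      Adj := M.Adj
      adj_sub := fun {a b} hab => hg.le a b hab
      edge_vert := fun {a b} hab => ⟨b, hab⟩
      symm := M.symm }
  have hKG : (G.deleteEdges {s(v₁, v₂)}).deleteEdges N.edgeSet =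
      Stmt10.KG G M Set.univ {v₁, v₂} := by
    ext a b
    rw [SimpleGraph.deleteEdges_adj, SimpleGraph.deleteEdges_adj]
    change (_ ∧ ¬ M.Adj a b) ↔ (G.Adj a b ∧ a ∈ Set.univ ∧ b ∈ Set.univ ∧
      ¬ (a ∈ ({v₁, v₂} : Set V) ∧ b ∈ ({v₁, v₂} : Set V)) ∧ ¬ M.Adj a b)
    simp only [Set.mem_singleton_iff, Sym2.eq_iff, Set.mem_univ, true_and, Set.mem_insert_iff]
    have e : G.Adj a b → a ≠ b := fun h => h.ne
    constructor
    · rintro ⟨⟨h1, h2⟩, h3⟩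
      refine ⟨h1, ?_, h3⟩
      rintro ⟨rfl | rfl, rfl | rfl⟩
      · exact e h1 rfl
      · exact h2 (Or.inl ⟨rfl, rfl⟩)
      · exact h2 (Or.inr ⟨rfl, rfl⟩)
      · exact e h1 rfl
    · rintro ⟨h1, h2, h3⟩
      refine ⟨⟨h1, ?_⟩, h3⟩
      rintro (⟨rfl, rfl⟩ | ⟨rfl, rfl⟩)
      · exact h2 ⟨Or.inl rfl, Or.inr rfl⟩
      · exact h2 ⟨Or.inr rfl, Or.inl rfl⟩
  refine ⟨N, ?_, hcov v₁ (Or.inl rfl), hcov v₂ (Or.inr rfl), η, hg.root v₁ (Or.inl rfl),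
    hg.root v₂ (Or.inr rfl), ?_, fun v _ => hg.int v, ?_⟩
  · rintro u ⟨w, hw⟩
    exact ⟨w, hw, fun y hy => hg.mat u y w hy hw⟩
  · intro v hv _ _
    split_ifs with h
    · exact hg.bd1 v hv h
    · exact hg.bd2 v hv
  · rw [hKG]
    exact hg.co
end
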